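/- Let A be an n×n real positive-semidefinite matrix, let 1 ≤ r < k ≤ n, and let Ω be an n×k random matrix with independent standard normal entries. Define the Nyström approximation Â = AΩ((Ω*AΩ)†)Ω*A and let Â_r = ⟦Â⟧_r. Then E‖A − Â_r‖₁ ≤ ‖A − ⟦A⟧_r‖₁ + 2·min over natural numbers ϱ with ϱ < k − 1 of [(1 + ϱ/(k − ϱ − 1)) · ‖A − ⟦A⟧_ϱ‖₁]. -/

import Mathlib

open Matrix MeasureTheory ProbabilityTheory
open scoped ENNReal NNReal ComplexOrder Classical

namespace PsdSketch

variable {𝕜 : Type*} [RCLike 𝕜]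

/-- The four Penrose conditions characterizing the Moore–Penrose pseudoinverse. -/
def IsMoorePenrose {m k : ℕ} (M : Matrix (Fin m) (Fin k) 𝕜)
    (X : Matrix (Fin k) (Fin m) 𝕜) : Prop :=
  M * X * M = M ∧ X * M * X = X ∧ (M * X)ᴴ = M * X ∧ (X * M)ᴴ = X * M

/-- The Moore–Penrose pseudoinverse `M†` (the unique matrix satisfying the
Penrose conditions). -/
noncomputable def pinv {m k : ℕ} (M : Matrix (Fin m) (Fin k) 𝕜) :
    Matrix (Fin k) (Fin m) 𝕜 :=
  if h : ∃ X, IsMoorePenrose M X then h.choose else 0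

/-- The Nyström approximation `Â = A Ω ((Ω* A Ω)†) Ω* A`. -/
noncomputable def nystrom {n k : ℕ} (A : Matrix (Fin n) (Fin n) 𝕜)
    (Ω : Matrix (Fin n) (Fin k) 𝕜) : Matrix (Fin n) (Fin n) 𝕜 :=
  A * Ω * pinv (Ωᴴ * A * Ω) * Ωᴴ * A

/-- The `i`-th singular value of a square matrix, 0-indexed and listed in weakly
decreasing order (so `sval M 0 = σ₁(M)`), with `sval M i = 0` for `i ≥ n`. -/
noncomputable def sval {n : ℕ} (M : Matrix (Fin n) (Fin n) 𝕜) (i : ℕ) : ℝ :=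
  if h : i < n then
    Real.sqrt
      ((Matrix.posSemidef_conjTranspose_mul_self M).1.eigenvalues
        (Tuple.sort (Matrix.posSemidef_conjTranspose_mul_self M).1.eigenvalues
          (Fin.rev ⟨i, h⟩)))
  else 0

/-- The Schatten `p`-norm: the `ℓ_p` norm of the vector of singular values. -/
noncomputable def schatten {n : ℕ} (p : ℝ≥0∞) (M : Matrix (Fin n) (Fin n) 𝕜) : ℝ :=
  if p = ∞ then sval M 0
  else (∑ i ∈ Finset.range n, sval M i ^ p.toReal) ^ (1 / p.toReal)

/-- `σ_{r+1}^{(p)}(M)`, the optimal rank-`r` approximation error of `M` in the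
Schatten `p`-norm: `(Σ_{i > r} σ_i(M)^p)^{1/p}` (for `p = ∞`, `σ_{r+1}(M)`). -/
noncomputable def tailNorm {n : ℕ} (p : ℝ≥0∞) (M : Matrix (Fin n) (Fin n) 𝕜)
    (r : ℕ) : ℝ :=
  if p = ∞ then sval M r
  else (∑ i ∈ Finset.Ico r n, sval M i ^ p.toReal) ^ (1 / p.toReal)

/-- `B` is a (simultaneous) best rank-`r` approximation of `M` with respect to every
Schatten `p`-norm; this is the defining property of an `r`-truncated SVD `⟦M⟧_r`. -/
def IsBestRankApprox {n : ℕ} (M B : Matrix (Fin n) (Fin n) 𝕜) (r : ℕ) : Prop :=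
  B.rank ≤ r ∧
    ∀ p : ℝ≥0∞, 1 ≤ p → ∀ C : Matrix (Fin n) (Fin n) 𝕜, C.rank ≤ r →
      schatten p (M - B) ≤ schatten p (M - C)

/-- `⟦M⟧_r`: a best rank-`r` approximation of `M` (an `r`-truncated SVD). -/
noncomputable def truncate {n : ℕ} (M : Matrix (Fin n) (Fin n) 𝕜) (r : ℕ) :
    Matrix (Fin n) (Fin n) 𝕜 :=
  if h : ∃ B, IsBestRankApprox M B r then h.choose else 0

/-- The distribution of an `n × k` random matrix with independent standard normal
entries (matrices identified with functions `Fin n → Fin k → ℝ`). -/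
noncomputable def gaussianEnsemble (n k : ℕ) : Measure (Fin n → Fin k → ℝ) :=
  Measure.pi fun _ => Measure.pi fun _ => gaussianReal 0 1

lemma sval_nonneg {n : ℕ} (M : Matrix (Fin n) (Fin n) ℝ) (i : ℕ) : 0 ≤ sval M i := by
  unfold sval; split_ifs <;> positivity

lemma sval_antitone {n : ℕ} (M : Matrix (Fin n) (Fin n) ℝ) : Antitone (sval M) := by
  intro i j hij
  by_cases hj : j < n
  · have hi : i < n := lt_of_le_of_lt hij hj
    simp only [sval, hi, hj, dif_pos]
    apply Real.sqrt_le_sqrt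
    apply Tuple.monotone_sort (Matrix.posSemidef_conjTranspose_mul_self M).1.eigenvalues
    rw [Fin.rev_le_rev]; exact hij
  · have : sval M j = 0 := by simp [sval, hj]
    rw [this]; exact sval_nonneg M i

/-- right singular vectors -/
lemma exists_right {n : ℕ} (M : Matrix (Fin n) (Fin n) ℝ) :
    ∃ V : Matrix (Fin n) (Fin n) ℝ, Vᵀ * V = 1 ∧ V * Vᵀ = 1 ∧
      Mᵀ * M * V = V * diagonal (fun i : Fin n => sval M i ^ 2) := by
  set hM := (Matrix.posSemidef_conjTranspose_mul_self M).1 with hMdef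
  let e : Fin n → Fin n := fun i => Tuple.sort hM.eigenvalues (Fin.rev i)
  have he : Function.Injective e := (Equiv.injective _).comp Fin.rev_injective
  let V : Matrix (Fin n) (Fin n) ℝ := of fun a i => hM.eigenvectorBasis (e i) a
  have h1 : Vᵀ * V = 1 := by
    ext i j
    have := orthonormal_iff_ite.mp hM.eigenvectorBasis.orthonormal (e i) (e j)
    simp only [Matrix.mul_apply, Matrix.transpose_apply, V, of_apply, Matrix.one_apply]
    simp only [PiLp.inner_apply, he.eq_iff] at this
    rw [← this]
    apply Finset.sum_congr rfl
    intro a _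
    simp [mul_comm]
  refine ⟨V, h1, mul_eq_one_comm.mp h1, ?_⟩
  ext a i
  have := congrFun (hM.mulVec_eigenvectorBasis (e i)) a
  rw [Matrix.mul_diagonal]
  have hs : sval M i ^ 2 = hM.eigenvalues (e i) := by
    simp only [sval, i.2, dif_pos]
    rw [Real.sq_sqrt]
    exact (Matrix.posSemidef_conjTranspose_mul_self M).eigenvalues_nonneg _
  rw [hs]
  simp only [Pi.smul_apply, smul_eq_mul] at this
  rw [mul_comm (V a i)]
  rw [← conjTranspose_eq_transpose_of_trivial]
  exact this

/-- SVD -/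
lemma exists_svd {n : ℕ} (M : Matrix (Fin n) (Fin n) ℝ) :
    ∃ (U V : Matrix (Fin n) (Fin n) ℝ) (e : Fin n → ℝ), (∀ i, 0 ≤ e i ∧ e i ≤ 1) ∧
      Vᵀ * V = 1 ∧ V * Vᵀ = 1 ∧ Uᵀ * U = diagonal e ∧
      M * V = U * diagonal (fun i : Fin n => sval M i) ∧ (∀ i : Fin n, e i * sval M i = sval M i) := by
  obtain ⟨V, h1, h2, h3⟩ := exists_right M
  have hMV : (M * V)ᵀ * (M * V) = diagonal (fun i : Fin n => sval M i ^ 2) := by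
    rw [transpose_mul]
    calc Vᵀ * Mᵀ * (M * V) = Vᵀ * (Mᵀ * M * V) := by simp only [Matrix.mul_assoc]
      _ = _ := by rw [h3, ← Matrix.mul_assoc, h1, Matrix.one_mul]
  refine ⟨M * V * diagonal (fun i : Fin n => (sval M i)⁻¹), V, fun i => if sval M i = 0 then 0 else 1,
    fun i => by beta_reduce; split_ifs <;> norm_num, h1, h2, ?_, ?_, ?_⟩
  · rw [transpose_mul, diagonal_transpose]
    calc _ = diagonal (fun i : Fin n => (sval M i)⁻¹) * ((M * V)ᵀ * (M * V)) *
          diagonal (fun i : Fin n => (sval M i)⁻¹) := by simp only [Matrix.mul_assoc]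
      _ = _ := by
        rw [hMV, diagonal_mul_diagonal, diagonal_mul_diagonal]
        congr 1; ext i
        split_ifs with h
        · simp [h]
        · field_simp
  · rw [Matrix.mul_assoc, diagonal_mul_diagonal]
    ext a i
    rw [mul_diagonal]
    by_cases h : sval M i = 0
    · have h4 := congrFun (congrFun hMV i) i
      simp only [Matrix.mul_apply, transpose_apply, diagonal_apply_eq, h] at h4
      norm_num at h4
      rw [Finset.sum_eq_zero_iff_of_nonneg (fun _ _ => mul_self_nonneg _)] at h4
      have := h4 a (Finset.mem_univ _)
      rw [Matrix.mul_apply, mul_self_eq_zero.mp this, zero_mul]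
    · simp [h]
  · intro i; beta_reduce; split_ifs with h <;> simp [h]

lemma dot_self_nonneg {n : ℕ} (x : Fin n → ℝ) : 0 ≤ x ⬝ᵥ x :=
  Finset.sum_nonneg fun i _ => mul_self_nonneg (x i)

lemma dot_le_half {n : ℕ} (x y : Fin n → ℝ) : x ⬝ᵥ y ≤ (x ⬝ᵥ x + y ⬝ᵥ y) / 2 := by
  have := dot_self_nonneg (x - y)
  simp only [sub_dotProduct, dotProduct_sub, dotProduct_comm y x] at this
  linarith

def IsContr {n : ℕ} (K : Matrix (Fin n) (Fin n) ℝ) : Prop :=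
  ∀ x, (K *ᵥ x) ⬝ᵥ (K *ᵥ x) ≤ x ⬝ᵥ x

lemma dot_mulVec_mulVec {n m l : ℕ} (K : Matrix (Fin n) (Fin m) ℝ) (L : Matrix (Fin n) (Fin l) ℝ)
    (x : Fin m → ℝ) (y : Fin l → ℝ) :
    (K *ᵥ x) ⬝ᵥ (L *ᵥ y) = x ⬝ᵥ ((Kᵀ * L) *ᵥ y) := by
  rw [← Matrix.mulVec_mulVec, Matrix.dotProduct_mulVec x, Matrix.vecMul_transpose]

lemma trace_contr_le {n : ℕ} (K M : Matrix (Fin n) (Fin n) ℝ) (hK : IsContr K) :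
    (Kᵀ * M).trace ≤ ∑ i ∈ Finset.range n, sval M i := by
  obtain ⟨U, V, e, he, h1, h2, h3, h4, h5⟩ := exists_svd M
  have hM : M = U * diagonal (fun i : Fin n => sval M i) * Vᵀ := by
    rw [← h4, Matrix.mul_assoc, h2, Matrix.mul_one]
  have : (Kᵀ * M).trace = ∑ i : Fin n, (Vᵀ * Kᵀ * U) i i * sval M i := by
    conv_lhs => rw [hM]
    rw [← Matrix.mul_assoc, trace_mul_comm, ← Matrix.mul_assoc, ← Matrix.mul_assoc]
    simp [Matrix.trace, mul_diagonal]
  rw [this, Finset.sum_range]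
  apply Finset.sum_le_sum
  intro i _
  have hs := sval_nonneg M i
  have : (Vᵀ * Kᵀ * U) i i ≤ 1 := by
    have e1 : (Vᵀ * Kᵀ * U) i i = (K *ᵥ (fun a => V a i)) ⬝ᵥ (fun a => U a i) := by
      rw [← transpose_mul, Matrix.mul_apply]; rfl
    rw [e1]
    have b1 := hK (fun a => V a i)
    have b2 : (fun a => V a i) ⬝ᵥ (fun a => V a i) = 1 := by
      have := congrFun (congrFun h1 i) i
      rw [Matrix.mul_apply, one_apply_eq] at this; exact this
    have b3 : (fun a => U a i) ⬝ᵥ (fun a => U a i) ≤ 1 := by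
      have := congrFun (congrFun h3 i) i
      rw [Matrix.mul_apply, diagonal_apply_eq] at this
      have h : (fun a => U a i) ⬝ᵥ (fun a => U a i) = e i := this
      rw [h]; exact (he i).2
    have := dot_le_half (K *ᵥ (fun a => V a i)) (fun a => U a i)
    linarith
  nlinarith

lemma exists_contr {n : ℕ} (M : Matrix (Fin n) (Fin n) ℝ) :
    ∃ K, IsContr K ∧ (Kᵀ * M).trace = ∑ i ∈ Finset.range n, sval M i := by
  obtain ⟨U, V, e, he, h1, h2, h3, h4, h5⟩ := exists_svd M
  refine ⟨U * Vᵀ, ?_, ?_⟩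
  · intro x
    rw [dot_mulVec_mulVec, transpose_mul, transpose_transpose]
    have : V * Uᵀ * (U * Vᵀ) = (Vᵀ)ᵀ * (diagonal e * Vᵀ) := by
      rw [← h3, transpose_transpose]; simp only [Matrix.mul_assoc]
    rw [this, ← dot_mulVec_mulVec]
    have h6 : x ⬝ᵥ x = (Vᵀ *ᵥ x) ⬝ᵥ (Vᵀ *ᵥ x) := by
      rw [dot_mulVec_mulVec, transpose_transpose, h2, one_mulVec]
    rw [h6, ← Matrix.mulVec_mulVec]
    apply Finset.sum_le_sum
    intro i _
    rw [mulVec_diagonal]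
    nlinarith [he i, mul_self_nonneg ((Vᵀ *ᵥ x) i)]
  · rw [transpose_mul, transpose_transpose, trace_mul_comm, ← Matrix.mul_assoc, trace_mul_comm, h4,
      ← Matrix.mul_assoc, h3, diagonal_mul_diagonal, trace_diagonal, Finset.sum_range]
    exact Finset.sum_congr rfl fun i _ => h5 i

lemma schatten_one {n : ℕ} (M : Matrix (Fin n) (Fin n) ℝ) :
    schatten 1 M = ∑ i ∈ Finset.range n, sval M i := by
  simp [schatten]

lemma schatten_one_add_le {n : ℕ} (M N : Matrix (Fin n) (Fin n) ℝ) :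
    schatten 1 (M + N) ≤ schatten 1 M + schatten 1 N := by
  simp only [schatten_one]
  obtain ⟨K, hK, h⟩ := exists_contr (M + N)
  rw [← h, Matrix.mul_add, trace_add]
  exact add_le_add (trace_contr_le K M hK) (trace_contr_le K N hK)

/-- subspace of vectors whose `V`-coordinates vanish on `J` -/
def coordSub {n : ℕ} (V : Matrix (Fin n) (Fin n) ℝ) (J : Finset (Fin n)) :
    Submodule ℝ (Fin n → ℝ) where
  carrier := {x | ∀ l ∈ J, (Vᵀ *ᵥ x) l = 0}
  add_mem' := by
    intro a b ha hb l hl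
    rw [mulVec_add, Pi.add_apply, ha l hl, hb l hl, add_zero]
  zero_mem' := by intro l _; rw [mulVec_zero]; rfl
  smul_mem' := by
    intro c x hx l hl
    rw [mulVec_smul, Pi.smul_apply, hx l hl, smul_zero]

lemma finrank_coordSub {n : ℕ} (V : Matrix (Fin n) (Fin n) ℝ) (J : Finset (Fin n)) :
    n ≤ Module.finrank ℝ (coordSub V J) + J.card := by
  let f : (Fin n → ℝ) →ₗ[ℝ] (J → ℝ) := (LinearMap.funLeft ℝ ℝ (fun j : J => (j : Fin n))).comp
    (Matrix.mulVecLin Vᵀ)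
  have hk : LinearMap.ker f = coordSub V J := by
    ext x
    simp only [LinearMap.mem_ker]
    constructor
    · intro h l hl
      exact congrFun h ⟨l, hl⟩
    · intro h
      ext ⟨l, hl⟩
      exact h l hl
  have h1 := LinearMap.finrank_range_add_finrank_ker f
  have h2 := Submodule.finrank_le (LinearMap.range f)
  rw [hk] at h1
  simp only [Module.finrank_fintype_fun_eq_card, Fintype.card_fin, Fintype.card_coe] at h1 h2
  omega

lemma exists_inter {n : ℕ} (S T : Submodule ℝ (Fin n → ℝ))
    (h : n < Module.finrank ℝ S + Module.finrank ℝ T) : ∃ x ∈ S, x ∈ T ∧ x ≠ 0 := by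
  have h1 := Submodule.finrank_sup_add_finrank_inf_eq S T
  have h2 := Submodule.finrank_le (S ⊔ T)
  simp only [Module.finrank_fintype_fun_eq_card, Fintype.card_fin] at h2
  have h3 : S ⊓ T ≠ ⊥ := by
    intro h0
    rw [h0, finrank_bot] at h1
    omega
  obtain ⟨x, hx, hx0⟩ := Submodule.exists_mem_ne_zero_of_ne_bot h3
  exact ⟨x, hx.1, hx.2, hx0⟩

lemma dot_orth {n : ℕ} {V : Matrix (Fin n) (Fin n) ℝ} (hV : V * Vᵀ = 1) (x : Fin n → ℝ) :
    x ⬝ᵥ x = ∑ l, (Vᵀ *ᵥ x) l ^ 2 := by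
  have : x ⬝ᵥ x = (Vᵀ *ᵥ x) ⬝ᵥ (Vᵀ *ᵥ x) := by
    rw [dot_mulVec_mulVec, transpose_transpose, hV, one_mulVec]
  rw [this]
  simp only [dotProduct, sq]

lemma dot_self_pos {n : ℕ} {x : Fin n → ℝ} (h : x ≠ 0) : 0 < x ⬝ᵥ x := by
  rcases (dot_self_nonneg x).lt_or_eq with h1 | h1
  · exact h1
  · exact absurd (dotProduct_self_eq_zero.mp h1.symm) h

lemma minmax {n : ℕ} {V : Matrix (Fin n) (Fin n) ℝ} (hV : V * Vᵀ = 1) (d : ℕ → ℝ)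
    (hd : Antitone d) (i : ℕ) (hi : i < n) (t : ℝ) (S : Submodule ℝ (Fin n → ℝ))
    (hS : n ≤ Module.finrank ℝ S + i)
    (hq : ∀ x ∈ S, ∑ l : Fin n, d l * (Vᵀ *ᵥ x) l ^ 2 ≤ t * x ⬝ᵥ x) : d i ≤ t := by
  let J : Finset (Fin n) := Finset.univ.filter (fun l => i < (l : ℕ))
  have hJ : J.card + i + 1 ≤ n := by
    have h1 : J.card + (Finset.univ.filter (fun l : Fin n => ¬ i < (l : ℕ))).card = n := by
      rw [Finset.card_filter_add_card_filter_not]; simp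
    have h2 : (Finset.univ.filter (fun l : Fin n => ¬ i < (l : ℕ))) = Finset.Iic ⟨i, hi⟩ := by
      ext l; simp [Fin.le_def]
    rw [h2, Fin.card_Iic] at h1
    simp at h1; omega
  obtain ⟨x, hxS, hxT, hx0⟩ := exists_inter S (coordSub V J) (by
    have := finrank_coordSub V J; omega)
  have h1 := hq x hxS
  have h2 : d i * x ⬝ᵥ x ≤ ∑ l : Fin n, d l * (Vᵀ *ᵥ x) l ^ 2 := by
    rw [dot_orth hV, Finset.mul_sum]
    apply Finset.sum_le_sum
    intro l _
    by_cases hl : i < (l : ℕ)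
    · have : (Vᵀ *ᵥ x) l = 0 := hxT l (by simp [J, hl])
      simp [this]
    · exact mul_le_mul_of_nonneg_right (hd (by omega)) (sq_nonneg _)
  exact le_of_mul_le_mul_right (h2.trans h1) (dot_self_pos hx0)

lemma minmax_exists {n : ℕ} {V : Matrix (Fin n) (Fin n) ℝ} (hV : V * Vᵀ = 1) (d : ℕ → ℝ)
    (hd : Antitone d) (i : ℕ) :
    ∃ S : Submodule ℝ (Fin n → ℝ), n ≤ Module.finrank ℝ S + i ∧
    ∀ x ∈ S, ∑ l : Fin n, d l * (Vᵀ *ᵥ x) l ^ 2 ≤ d i * x ⬝ᵥ x := by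
  let J : Finset (Fin n) := Finset.univ.filter (fun l => (l : ℕ) < i)
  have hJ : J.card ≤ i := by
    have : J.card ≤ (Finset.range i).card := by
      apply Finset.card_le_card_of_injOn (fun l : Fin n => (l : ℕ))
      · intro l hl; simpa [J] using hl
      · exact Fin.val_injective.injOn
    simpa using this
  refine ⟨coordSub V J, ?_, ?_⟩
  · have := finrank_coordSub V J; omega
  · intro x hx
    rw [dot_orth hV, Finset.mul_sum]
    apply Finset.sum_le_sum
    intro l _
    by_cases hl : (l : ℕ) < i
    · have : (Vᵀ *ᵥ x) l = 0 := hx l (by simp [J, hl])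
      simp [this]
    · exact mul_le_mul_of_nonneg_right (hd (by omega)) (sq_nonneg _)

lemma quad_diag {n : ℕ} {V N : Matrix (Fin n) (Fin n) ℝ} (hV : V * Vᵀ = 1) (d : ℕ → ℝ)
    (h : N * V = V * diagonal (fun i : Fin n => d i)) (x : Fin n → ℝ) :
    x ⬝ᵥ (N *ᵥ x) = ∑ l : Fin n, d l * (Vᵀ *ᵥ x) l ^ 2 := by
  have hN : N = (Vᵀ)ᵀ * (diagonal (fun i : Fin n => d i) * Vᵀ) := by
    rw [transpose_transpose, ← Matrix.mul_assoc, ← h, Matrix.mul_assoc, hV, Matrix.mul_one]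
  conv_lhs => rw [hN]
  rw [← dot_mulVec_mulVec, ← Matrix.mulVec_mulVec]
  apply Finset.sum_congr rfl
  intro l _
  rw [mulVec_diagonal]; ring

lemma sval_of_le {n : ℕ} (M : Matrix (Fin n) (Fin n) ℝ) {i : ℕ} (h : n ≤ i) : sval M i = 0 := by
  simp [sval, not_lt.mpr h]

lemma sval_le {n : ℕ} (M : Matrix (Fin n) (Fin n) ℝ) (i : ℕ) (t : ℝ) (ht : 0 ≤ t)
    (S : Submodule ℝ (Fin n → ℝ)) (hS : n ≤ Module.finrank ℝ S + i)
    (h : ∀ x ∈ S, (M *ᵥ x) ⬝ᵥ (M *ᵥ x) ≤ t ^ 2 * x ⬝ᵥ x) : sval M i ≤ t := by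
  by_cases hi : i < n
  · obtain ⟨V, h1, h2, h3⟩ := exists_right M
    have := minmax h2 (fun i => sval M i ^ 2)
      (fun a b hab => pow_le_pow_left₀ (sval_nonneg _ _) (sval_antitone M hab) 2) i hi (t ^ 2) S hS
      (fun x hx => by
        rw [← quad_diag h2 (fun i => sval M i ^ 2) h3 x, ← dot_mulVec_mulVec]; exact h x hx)
    exact le_of_sq_le_sq this ht
  · rw [sval_of_le M (by omega)]; exact ht

lemma sval_exists {n : ℕ} (M : Matrix (Fin n) (Fin n) ℝ) (i : ℕ) :
    ∃ S : Submodule ℝ (Fin n → ℝ), n ≤ Module.finrank ℝ S + i ∧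
      ∀ x ∈ S, (M *ᵥ x) ⬝ᵥ (M *ᵥ x) ≤ sval M i ^ 2 * x ⬝ᵥ x := by
  obtain ⟨V, h1, h2, h3⟩ := exists_right M
  obtain ⟨S, hS, h⟩ := minmax_exists h2 (fun i => sval M i ^ 2)
      (fun a b hab => pow_le_pow_left₀ (sval_nonneg _ _) (sval_antitone M hab) 2) i
  refine ⟨S, hS, fun x hx => ?_⟩
  have := h x hx
  rwa [← quad_diag h2 (fun i => sval M i ^ 2) h3 x, ← dot_mulVec_mulVec] at this

lemma weyl {n : ℕ} (M C : Matrix (Fin n) (Fin n) ℝ) (r i : ℕ) (hC : C.rank ≤ r) :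
    sval M (r + i) ≤ sval (M - C) i := by
  obtain ⟨S, hS, h⟩ := sval_exists (M - C) i
  have h1 := LinearMap.finrank_range_add_finrank_ker C.mulVecLin
  have h2 : Module.finrank ℝ (LinearMap.range C.mulVecLin) ≤ r := hC
  have h3 := Submodule.finrank_sup_add_finrank_inf_eq S (LinearMap.ker C.mulVecLin)
  have h4 := Submodule.finrank_le (S ⊔ LinearMap.ker C.mulVecLin)
  simp only [Module.finrank_fintype_fun_eq_card, Fintype.card_fin] at h1 h4
  apply sval_le M _ _ (sval_nonneg _ _) (S ⊓ LinearMap.ker C.mulVecLin)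
  · omega
  · intro x hx
    have hC0 : C *ᵥ x = 0 := hx.2
    have := h x hx.1
    rwa [sub_mulVec, hC0, sub_zero] at this

lemma psd_eig {n : ℕ} {M : Matrix (Fin n) (Fin n) ℝ} (hM : M.PosSemidef) :
    ∃ V : Matrix (Fin n) (Fin n) ℝ, Vᵀ * V = 1 ∧ V * Vᵀ = 1 ∧
      M * V = V * diagonal (fun i : Fin n => sval M i) := by
  obtain ⟨V, h1, h2, h3⟩ := exists_right M
  refine ⟨V, h1, h2, ?_⟩
  have hs : Mᵀ = M := by rw [← conjTranspose_eq_transpose_of_trivial]; exact hM.1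
  suffices h : ∀ j : Fin n, M *ᵥ (fun a => V a j) = sval M j • (fun a => V a j) by
    ext a j
    rw [mul_diagonal]
    have := congrFun (h j) a
    rw [Pi.smul_apply, smul_eq_mul, mul_comm] at this
    exact this
  intro j
  set v : Fin n → ℝ := fun a => V a j with hv
  set s := sval M j with hsdef
  have hs0 : 0 ≤ s := sval_nonneg _ _
  have h4 : M *ᵥ (M *ᵥ v) = (s ^ 2) • v := by
    rw [mulVec_mulVec]
    ext a
    have := congrFun (congrFun h3 a) j
    rw [mul_diagonal, hs] at this
    rw [Pi.smul_apply, smul_eq_mul, mul_comm]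
    exact this
  rcases hs0.lt_or_eq with hp | hp
  · have hw : M *ᵥ (M *ᵥ v - s • v) = -s • (M *ᵥ v - s • v) := by
      rw [mulVec_sub, h4, mulVec_smul]; ext a; simp; ring
    have h5 : 0 ≤ (M *ᵥ v - s • v) ⬝ᵥ (M *ᵥ (M *ᵥ v - s • v)) := by
      have := hM.dotProduct_mulVec_nonneg (M *ᵥ v - s • v)
      simpa using this
    rw [hw, dotProduct_smul, smul_eq_mul] at h5
    have h6 := dot_self_nonneg (M *ᵥ v - s • v)
    have h7 : (M *ᵥ v - s • v) ⬝ᵥ (M *ᵥ v - s • v) = 0 := by nlinarith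
    exact sub_eq_zero.mp (dotProduct_self_eq_zero.mp h7)
  · rw [← hp] at h4 ⊢
    have : (M *ᵥ v) ⬝ᵥ (M *ᵥ v) = 0 := by
      rw [dot_mulVec_mulVec, hs, ← mulVec_mulVec, h4]; simp
    rw [dotProduct_self_eq_zero.mp this, zero_smul]

lemma psd_schatten_one {n : ℕ} {M : Matrix (Fin n) (Fin n) ℝ} (hM : M.PosSemidef) :
    schatten 1 M = M.trace := by
  obtain ⟨V, h1, h2, h3⟩ := psd_eig hM
  have hN : M = V * diagonal (fun i : Fin n => sval M i) * Vᵀ := by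
    rw [← h3, Matrix.mul_assoc, h2, Matrix.mul_one]
  rw [schatten_one]
  conv_rhs => rw [hN]
  rw [trace_mul_comm, ← Matrix.mul_assoc, h1, Matrix.one_mul, trace_diagonal, Finset.sum_range]

lemma sval_mono {n : ℕ} {M N : Matrix (Fin n) (Fin n) ℝ} (hM : M.PosSemidef) (hN : N.PosSemidef)
    (hMN : (N - M).PosSemidef) (i : ℕ) : sval M i ≤ sval N i := by
  by_cases hi : i < n
  · obtain ⟨V, h1, h2, h3⟩ := psd_eig hM
    obtain ⟨W, k1, k2, k3⟩ := psd_eig hN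
    obtain ⟨S, hS, h⟩ := minmax_exists k2 (sval N) (sval_antitone N) i
    apply minmax h2 (sval M) (sval_antitone M) i hi _ S hS
    intro x hx
    refine le_trans ?_ (h x hx)
    rw [← quad_diag h2 _ h3, ← quad_diag k2 _ k3]
    have := hMN.dotProduct_mulVec_nonneg x
    simp only [star_trivial, sub_mulVec, dotProduct_sub] at this
    linarith
  · rw [sval_of_le M (by omega)]; exact sval_nonneg _ _

lemma schatten_mono {n : ℕ} {M N : Matrix (Fin n) (Fin n) ℝ} (h : ∀ i, sval M i ≤ sval N i)
    (p : ℝ≥0∞) : schatten p M ≤ schatten p N := by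
  unfold schatten
  split_ifs with hp
  · exact h 0
  · apply Real.rpow_le_rpow
    · exact Finset.sum_nonneg fun i _ => Real.rpow_nonneg (sval_nonneg _ _) _
    · exact Finset.sum_le_sum fun i _ =>
        Real.rpow_le_rpow (sval_nonneg _ _) (h i) ENNReal.toReal_nonneg
    · positivity

lemma trunc_exists {n : ℕ} {M : Matrix (Fin n) (Fin n) ℝ} (hM : M.PosSemidef) (r : ℕ) :
    ∃ B, B.rank ≤ r ∧ ∀ i, sval (M - B) i ≤ sval M (r + i) := by
  obtain ⟨V, h1, h2, h3⟩ := psd_eig hM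
  let d : Fin n → ℝ := fun l => if (l : ℕ) < r then sval M l else 0
  let B := V * diagonal d * Vᵀ
  have hJr : (Finset.univ.filter (fun l : Fin n => (l : ℕ) < r)).card ≤ r := by
    have : (Finset.univ.filter (fun l : Fin n => (l : ℕ) < r)).card ≤ (Finset.range r).card := by
      apply Finset.card_le_card_of_injOn (fun l : Fin n => (l : ℕ))
      · intro l hl; simpa using hl
      · exact Fin.val_injective.injOn
    simpa using this
  refine ⟨B, ?_, ?_⟩
  · calc B.rank ≤ (V * diagonal d).rank := rank_mul_le_left _ _
      _ ≤ (diagonal d).rank := rank_mul_le_right _ _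
      _ = Fintype.card {i // d i ≠ 0} := rank_diagonal d
      _ ≤ r := by
        rw [Fintype.card_subtype]
        refine le_trans (Finset.card_le_card ?_) hJr
        intro l hl
        simp only [Finset.mem_filter, Finset.mem_univ, true_and, d] at hl ⊢
        by_contra h; simp [h] at hl
  · intro i
    have hN : M = V * diagonal (fun i : Fin n => sval M i) * Vᵀ := by
      rw [← h3, Matrix.mul_assoc, h2, Matrix.mul_one]
    let f : Fin n → ℝ := fun l => if (l : ℕ) < r then 0 else sval M l
    have hMB : M - B = V * (diagonal f * Vᵀ) := by
      conv_lhs => rw [hN]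
      simp only [B]
      rw [← Matrix.sub_mul, ← Matrix.mul_sub, diagonal_sub, Matrix.mul_assoc]
      congr 3
      ext l; simp only [d, f]; split_ifs <;> simp
    let J : Finset (Fin n) := Finset.univ.filter (fun l => r ≤ (l : ℕ) ∧ (l : ℕ) < r + i)
    have hJ : J.card ≤ i := by
      have : J.card ≤ (Finset.Ico r (r + i)).card := by
        apply Finset.card_le_card_of_injOn (fun l : Fin n => (l : ℕ))
        · intro l hl; simpa [J] using hl
        · exact Fin.val_injective.injOn
      simpa using this
    apply sval_le _ _ _ (sval_nonneg _ _) (coordSub V J)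
    · have := finrank_coordSub V J; omega
    · intro x hx
      rw [hMB, ← mulVec_mulVec, dot_mulVec_mulVec, h1, one_mulVec, dot_orth h2 x, Finset.mul_sum,
        ← mulVec_mulVec]
      apply Finset.sum_le_sum
      intro l _
      rw [mulVec_diagonal]
      by_cases hl : l ∈ J
      · simp [hx l hl]
      · have : 0 ≤ f l ∧ f l ≤ sval M (r + i) := by
          simp only [f]
          split_ifs with hlr
          · exact ⟨le_rfl, sval_nonneg _ _⟩
          · refine ⟨sval_nonneg _ _, sval_antitone M ?_⟩
            simp [J] at hl; omega
        have h5 : f l ^ 2 ≤ sval M (r + i) ^ 2 := pow_le_pow_left₀ this.1 this.2 2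
        nlinarith [sq_nonneg ((Vᵀ *ᵥ x) l)]

lemma truncate_spec {n : ℕ} {M : Matrix (Fin n) (Fin n) ℝ} (hM : M.PosSemidef) (r : ℕ) :
    IsBestRankApprox M (truncate M r) r := by
  have : ∃ B, IsBestRankApprox M B r := by
    obtain ⟨B, hB, h⟩ := trunc_exists hM r
    exact ⟨B, hB, fun p _ C hC => schatten_mono (fun i => (h i).trans (weyl M C r i hC)) p⟩
  unfold truncate
  rw [dif_pos this]
  exact this.choose_spec

lemma truncate_upper {n : ℕ} {M : Matrix (Fin n) (Fin n) ℝ} (hM : M.PosSemidef) (r : ℕ) :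
    schatten 1 (M - truncate M r) ≤ ∑ i ∈ Finset.range n, sval M (r + i) := by
  obtain ⟨B, hB, h⟩ := trunc_exists hM r
  refine ((truncate_spec hM r).2 1 le_rfl B hB).trans ?_
  rw [schatten_one]
  exact Finset.sum_le_sum fun i _ => h i

lemma truncate_lower {n : ℕ} {M : Matrix (Fin n) (Fin n) ℝ} (hM : M.PosSemidef) (r : ℕ) :
    ∑ i ∈ Finset.range n, sval M (r + i) ≤ schatten 1 (M - truncate M r) := by
  rw [schatten_one]
  exact Finset.sum_le_sum fun i _ => weyl M _ r i (truncate_spec hM r).1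

lemma pinv_spec {k : ℕ} {S : Matrix (Fin k) (Fin k) ℝ} (hS : S.PosSemidef) :
    S * pinv S * S = S := by
  have : ∃ X, IsMoorePenrose S X := by
    obtain ⟨V, h1, h2, h3⟩ := psd_eig hS
    let D := diagonal (fun i : Fin k => sval S i)
    let E := diagonal (fun i : Fin k => (sval S i)⁻¹)
    have hN : S = V * D * Vᵀ := by
      rw [← h3, Matrix.mul_assoc, h2, Matrix.mul_one]
    have hmul : ∀ P Q : Matrix (Fin k) (Fin k) ℝ,
        V * P * Vᵀ * (V * Q * Vᵀ) = V * (P * Q) * Vᵀ := by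
      intro P Q
      calc _ = V * P * (Vᵀ * V) * Q * Vᵀ := by simp only [Matrix.mul_assoc]
        _ = _ := by rw [h1, Matrix.mul_one]; simp only [Matrix.mul_assoc]
    have hH : ∀ f : Fin k → ℝ, (V * diagonal f * Vᵀ)ᴴ = V * diagonal f * Vᵀ := by
      intro f
      rw [conjTranspose_eq_transpose_of_trivial]
      simp only [transpose_mul, transpose_transpose, diagonal_transpose, Matrix.mul_assoc]
    refine ⟨V * E * Vᵀ, ?_, ?_, ?_, ?_⟩ <;> rw [hN] <;>
      simp only [hmul, D, E, diagonal_mul_diagonal, hH]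
    · congr 3; ext i
      by_cases h : sval S i = 0 <;> simp [h]
    · congr 3; ext i
      by_cases h : sval S i = 0 <;> simp [h]
  unfold pinv
  rw [dif_pos this]
  exact this.choose_spec.1

/-- Structure of the Nyström approximation. -/
lemma nystrom_struct {n k : ℕ} {A : Matrix (Fin n) (Fin n) ℝ} (hA : A.PosSemidef)
    (Ω : Matrix (Fin n) (Fin k) ℝ) :
    ∃ L : Matrix (Fin k) (Fin n) ℝ, (Ωᵀ * A * Ω) * L = Ωᵀ * A ∧
      nystrom A Ω = Lᵀ * (Ωᵀ * A * Ω) * L := by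
  have hs : Aᵀ = A := by rw [← conjTranspose_eq_transpose_of_trivial]; exact hA.1
  obtain ⟨B, hB⟩ : ∃ B : Matrix (Fin n) (Fin n) ℝ, A = Bᴴ * B := by
    obtain ⟨V, h1, h2, h3⟩ := psd_eig hA
    refine ⟨diagonal (fun i : Fin n => Real.sqrt (sval A i)) * Vᵀ, ?_⟩
    rw [conjTranspose_eq_transpose_of_trivial, transpose_mul, transpose_transpose,
      diagonal_transpose]
    have e : V * diagonal (fun i : Fin n => Real.sqrt (sval A i)) *
        (diagonal (fun i : Fin n => Real.sqrt (sval A i)) * Vᵀ) =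
        V * (diagonal (fun i : Fin n => Real.sqrt (sval A i)) *
        diagonal (fun i : Fin n => Real.sqrt (sval A i))) * Vᵀ := by
      simp only [Matrix.mul_assoc]
    rw [e, diagonal_mul_diagonal]
    simp only [Real.mul_self_sqrt (sval_nonneg A _)]
    rw [← h3, Matrix.mul_assoc, h2, Matrix.mul_one]
  rw [conjTranspose_eq_transpose_of_trivial] at hB
  set S := Ωᵀ * A * Ω with hS
  have hSp : S.PosSemidef := by
    have := hA.conjTranspose_mul_mul_same Ω
    rwa [conjTranspose_eq_transpose_of_trivial] at this
  have hT := pinv_spec hSp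
  have hSs : Sᵀ = S := by rw [← conjTranspose_eq_transpose_of_trivial]; exact hSp.1
  have hSR : S = (B * Ω)ᴴ * (B * Ω) := by
    rw [hS, hB, conjTranspose_eq_transpose_of_trivial, transpose_mul]
    simp only [Matrix.mul_assoc]
  have h1 : (S * pinv S - 1) * (B * Ω)ᴴ = 0 := by
    rw [← Matrix.mul_conjTranspose_mul_self_eq_zero (B * Ω), ← hSR, Matrix.sub_mul, hT,
      Matrix.one_mul, sub_self]
  have h2 : S * pinv S * (Ωᵀ * A) = Ωᵀ * A := by
    have h3 : Ωᵀ * A = (B * Ω)ᴴ * B := by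
      rw [hB, conjTranspose_eq_transpose_of_trivial, transpose_mul]
      simp only [Matrix.mul_assoc]
    rw [Matrix.sub_mul, Matrix.one_mul, sub_eq_zero] at h1
    rw [h3, ← Matrix.mul_assoc, h1]
  refine ⟨pinv S * (Ωᵀ * A), by rw [← Matrix.mul_assoc, h2], ?_⟩
  have h4 : (pinv S * (Ωᵀ * A))ᵀ * S = A * Ω := by
    have := congrArg transpose h2
    simp only [transpose_mul, transpose_transpose, hs, hSs, Matrix.mul_assoc] at this ⊢
    exact this
  rw [h4]
  unfold nystrom
  rw [conjTranspose_eq_transpose_of_trivial, ← hS]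
  simp only [Matrix.mul_assoc]

lemma nystrom_facts {n k : ℕ} {A : Matrix (Fin n) (Fin n) ℝ} (hA : A.PosSemidef)
    (Ω : Matrix (Fin n) (Fin k) ℝ) :
    (nystrom A Ω).PosSemidef ∧ (A - nystrom A Ω).PosSemidef ∧
    ∀ Y : Matrix (Fin k) (Fin n) ℝ,
      (A - nystrom A Ω).trace ≤ ((1 - Ω * Y)ᵀ * A * (1 - Ω * Y)).trace := by
  obtain ⟨L, h1, h2⟩ := nystrom_struct hA Ω
  have hs : Aᵀ = A := by rw [← conjTranspose_eq_transpose_of_trivial]; exact hA.1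
  set S := Ωᵀ * A * Ω with hS
  have hSp : S.PosSemidef := by
    have := hA.conjTranspose_mul_mul_same Ω
    rwa [conjTranspose_eq_transpose_of_trivial] at this
  have hSs : Sᵀ = S := by rw [← conjTranspose_eq_transpose_of_trivial]; exact hSp.1
  have h3 : A * Ω = Lᵀ * S := by
    have := congrArg transpose h1
    simp only [transpose_mul, transpose_transpose, hs, hSs] at this
    exact this.symm
  have key : ∀ Y : Matrix (Fin k) (Fin n) ℝ, (1 - Ω * Y)ᵀ * A * (1 - Ω * Y) =
      (A - nystrom A Ω) + (Y - L)ᵀ * S * (Y - L) := by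
    intro Y
    have e1 : (1 - Ω * Y)ᵀ * A * (1 - Ω * Y) =
        A - (A * Ω) * Y - Yᵀ * (Ωᵀ * A) + Yᵀ * S * Y := by
      rw [hS]
      simp only [transpose_sub, transpose_one, transpose_mul, Matrix.sub_mul, Matrix.mul_sub,
        Matrix.one_mul, Matrix.mul_one, Matrix.mul_assoc]
      abel
    rw [e1, h2, h3, ← h1]
    simp only [transpose_sub, Matrix.sub_mul, Matrix.mul_sub, Matrix.mul_assoc]
    abel
  refine ⟨?_, ?_, ?_⟩
  · rw [h2, ← conjTranspose_eq_transpose_of_trivial]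
    exact hSp.conjTranspose_mul_mul_same L
  · have := key L
    rw [sub_self, Matrix.mul_zero, add_zero] at this
    rw [← this, ← conjTranspose_eq_transpose_of_trivial]
    exact hA.conjTranspose_mul_mul_same _
  · intro Y
    rw [key Y, trace_add]
    have : 0 ≤ ((Y - L)ᵀ * S * (Y - L)).trace := by
      rw [← conjTranspose_eq_transpose_of_trivial]
      exact (hSp.conjTranspose_mul_mul_same _).trace_nonneg
    linarith

/-- Deterministic part of the theorem. -/
lemma det_bound {n k r : ℕ} {A : Matrix (Fin n) (Fin n) ℝ} (hA : A.PosSemidef)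
    (Ω : Matrix (Fin n) (Fin k) ℝ) :
    schatten 1 (A - truncate (nystrom A Ω) r) ≤
      schatten 1 (A - truncate A r) + (A - nystrom A Ω).trace := by
  obtain ⟨h1, h2, -⟩ := nystrom_facts hA Ω
  have e : A - truncate (nystrom A Ω) r =
      (nystrom A Ω - truncate (nystrom A Ω) r) + (A - nystrom A Ω) := by abel
  rw [e]
  refine (schatten_one_add_le _ _).trans ?_
  rw [psd_schatten_one h2]
  gcongr
  refine (truncate_upper h1 r).trans (le_trans ?_ (truncate_lower hA r))
  exact Finset.sum_le_sum fun i _ => sval_mono h1 hA h2 _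

/-- trace bound by orthogonal coordinates -/
lemma trace_bound {n k : ℕ} {A : Matrix (Fin n) (Fin n) ℝ} (hA : A.PosSemidef)
    (V : Matrix (Fin n) (Fin n) ℝ) (h1 : Vᵀ * V = 1) (h2 : V * Vᵀ = 1)
    (h3 : A * V = V * diagonal (fun i : Fin n => sval A i))
    (Ω : Matrix (Fin n) (Fin k) ℝ) (Z : Matrix (Fin k) (Fin n) ℝ) (ϱ : ℕ)
    (hZ0 : ∀ a (j : Fin n), ϱ ≤ (j : ℕ) → Z a j = 0)
    (hZ : ∀ i j : Fin n, (i : ℕ) < ϱ → (j : ℕ) < ϱ → (Vᵀ * Ω * Z) i j = if i = j then 1 else 0) :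
    (A - nystrom A Ω).trace ≤ ∑ i : Fin n, if (i : ℕ) < ϱ then 0 else
      sval A i * (1 + ∑ j : Fin n, if (j : ℕ) < ϱ then (Vᵀ * Ω * Z) i j ^ 2 else 0) := by
  have hN : A = V * diagonal (fun i : Fin n => sval A i) * Vᵀ := by
    rw [← h3, Matrix.mul_assoc, h2, Matrix.mul_one]
  refine ((nystrom_facts hA Ω).2.2 (Z * Vᵀ)).trans (le_of_eq ?_)
  set D := diagonal (fun i : Fin n => sval A i) with hD
  have e1 : Vᵀ * (1 - Ω * (Z * Vᵀ)) = (1 - Vᵀ * Ω * Z) * Vᵀ := by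
    rw [Matrix.mul_sub, Matrix.sub_mul]; simp only [Matrix.mul_assoc, Matrix.mul_one, Matrix.one_mul]
  set W := 1 - Vᵀ * Ω * Z with hW
  have e2 : (1 - Ω * (Z * Vᵀ))ᵀ * A * (1 - Ω * (Z * Vᵀ)) = V * (Wᵀ * D * W) * Vᵀ := by
    have e3 := congrArg transpose e1
    rw [transpose_mul, transpose_transpose, transpose_mul W Vᵀ, transpose_transpose] at e3
    conv_lhs => rw [hN]
    calc _ = ((1 - Ω * (Z * Vᵀ))ᵀ * V) * D * (Vᵀ * (1 - Ω * (Z * Vᵀ))) := by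
            simp only [Matrix.mul_assoc]
      _ = _ := by
        rw [e3, e1]; simp only [Matrix.mul_assoc]
  rw [e2, trace_mul_comm, ← Matrix.mul_assoc, h1, Matrix.one_mul]
  have e4 : (Wᵀ * D * W).trace = ∑ i : Fin n, sval A i * ∑ j, W i j ^ 2 := by
    have e5 : ∀ j, (Wᵀ * D * W) j j = ∑ i : Fin n, W i j * sval A i * W i j := by
      intro j
      rw [Matrix.mul_apply]
      apply Finset.sum_congr rfl; intro i _
      rw [hD, mul_diagonal, transpose_apply]
    rw [Matrix.trace]
    simp only [Matrix.diag_apply, e5]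
    rw [Finset.sum_comm]
    apply Finset.sum_congr rfl; intro i _
    rw [Finset.mul_sum]
    apply Finset.sum_congr rfl; intro j _
    ring
  rw [e4]
  apply Finset.sum_congr rfl; intro i _
  have hq : ∀ i j : Fin n, ϱ ≤ (j : ℕ) → (Vᵀ * Ω * Z) i j = 0 := by
    intro i j hj
    rw [Matrix.mul_apply]
    exact Finset.sum_eq_zero fun a _ => by rw [hZ0 a j hj, mul_zero]
  split_ifs with hi
  · apply mul_eq_zero_of_right
    apply Finset.sum_eq_zero; intro j _
    rw [hW, Matrix.sub_apply, Matrix.one_apply]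
    by_cases hj : (j : ℕ) < ϱ
    · rw [hZ i j hi hj]; simp
    · rw [hq i j (by omega)]
      have : i ≠ j := by rintro rfl; exact hj hi
      simp [this]
  · congr 1
    have : (1 : ℝ) = ∑ j, if i = j then 1 else 0 := by simp
    conv_rhs => rw [this]
    rw [← Finset.sum_add_distrib]
    apply Finset.sum_congr rfl; intro j _
    rw [hW, Matrix.sub_apply, Matrix.one_apply]
    by_cases hj : (j : ℕ) < ϱ
    · have : i ≠ j := by rintro rfl; exact hi hj
      simp [this, hj]
    · rw [hq i j (by omega)]
      simp [hj]

lemma gauss_exp (t : ℝ) (ht : 0 ≤ t) :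
    ∫ x, Real.exp (-(t * x ^ 2 / 2)) ∂(gaussianReal 0 1) = (1 + t) ^ (-(1 / 2) : ℝ) := by
  rw [integral_gaussianReal_eq_integral_smul one_ne_zero]
  have h : ∀ x : ℝ, gaussianPDFReal 0 1 x • Real.exp (-(t * x ^ 2 / 2)) =
      (√(2 * Real.pi))⁻¹ * Real.exp (-((1 + t) / 2) * x ^ 2) := by
    intro x
    rw [gaussianPDFReal, smul_eq_mul, mul_assoc, ← Real.exp_add]
    simp only [NNReal.coe_one, mul_one, sub_zero]
    congr 2; ring
  simp_rw [h]
  rw [integral_const_mul, integral_gaussian, Real.rpow_neg (by linarith), ← Real.sqrt_eq_rpow,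
    ← Real.sqrt_inv, ← Real.sqrt_inv, ← Real.sqrt_mul (by positivity)]
  congr 1
  field_simp

lemma lint_exp (a : ℝ) (ha : 0 ≤ a) :
    (ENNReal.ofReal a)⁻¹ ≤ ∫⁻ t in Set.Ioi (0 : ℝ), ENNReal.ofReal (Real.exp (-(t * a / 2)) / 2) := by
  rcases ha.lt_or_eq with h | h
  · have hi : IntegrableOn (fun t : ℝ => Real.exp (-(t * a / 2)) / 2) (Set.Ioi 0) := by
      have h1 : ∀ t : ℝ, Real.exp (-(t * a / 2)) / 2 = Real.exp (-(a / 2) * t) / 2 := by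
        intro t; congr 2; ring
      simp_rw [h1]
      exact (integrableOn_exp_mul_Ioi (a := -(a / 2)) (by linarith) 0).div_const 2
    rw [← ofReal_integral_eq_lintegral_ofReal hi (Filter.Eventually.of_forall fun t => by positivity),
      ← ENNReal.ofReal_inv_of_pos h]
    apply ENNReal.ofReal_le_ofReal
    have h1 : ∀ t : ℝ, Real.exp (-(t * a / 2)) / 2 = Real.exp (-(a / 2) * t) / 2 := by
      intro t; congr 2; ring
    simp_rw [h1]
    rw [integral_div, integral_exp_mul_Ioi (by linarith)]
    simp
    apply le_of_eq; field_simp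
  · subst h
    simp

lemma lint_pow (m : ℕ) (hm : 3 ≤ m) :
    ∫⁻ t in Set.Ioi (0 : ℝ), ENNReal.ofReal ((1 + t) ^ (-(m / 2) : ℝ) / 2) =
      ENNReal.ofReal (1 / ((m : ℝ) - 2)) := by
  have hm' : (3 : ℝ) ≤ m := by exact_mod_cast hm
  let g : ℝ → ℝ := fun t => -(1 / ((m : ℝ) - 2)) * (1 + t) ^ (-((m : ℝ) - 2) / 2)
  have hd : ∀ t ∈ Set.Ici (0 : ℝ), HasDerivAt g ((1 + t) ^ (-(m / 2) : ℝ) / 2) t := by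
    intro t ht
    have ht' : (0 : ℝ) ≤ t := ht
    have h1 : HasDerivAt (fun t : ℝ => 1 + t) 1 t := (hasDerivAt_id t).const_add 1
    have h2 := (h1.rpow_const (p := -((m : ℝ) - 2) / 2) (Or.inl (by linarith))).const_mul
      (-(1 / ((m : ℝ) - 2)))
    refine h2.congr_deriv ?_
    have : -((m : ℝ) - 2) / 2 - 1 = -(m / 2) := by ring
    rw [this]
    have : (m : ℝ) - 2 ≠ 0 := by linarith
    field_simp
  have hp : ∀ t ∈ Set.Ioi (0 : ℝ), 0 ≤ (1 + t) ^ (-(m / 2) : ℝ) / 2 := by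
    intro t ht
    have : (0 : ℝ) < t := ht
    positivity
  have hl : Filter.Tendsto g Filter.atTop (nhds 0) := by
    have h1 := tendsto_rpow_neg_atTop (y := ((m : ℝ) - 2) / 2) (by linarith)
    have h2 : Filter.Tendsto (fun t : ℝ => 1 + t) Filter.atTop Filter.atTop :=
      Filter.tendsto_atTop_add_const_left _ _ Filter.tendsto_id
    have h3 := (h1.comp h2).const_mul (-(1 / ((m : ℝ) - 2)))
    rw [mul_zero] at h3
    refine h3.congr fun t => ?_
    simp only [g, Function.comp]
    congr 2; ring
  rw [← ofReal_integral_eq_lintegral_ofReal (integrableOn_Ioi_deriv_of_nonneg' hd hp hl)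
    ((ae_restrict_iff' measurableSet_Ioi).mpr (Filter.Eventually.of_forall hp)),
    integral_Ioi_of_hasDerivAt_of_nonneg' hd hp hl]
  congr 1
  simp [g]

lemma inv_chi {k : ℕ} (J : Finset (Fin k)) (hJ : 3 ≤ J.card) :
    ∫⁻ x, (ENNReal.ofReal (∑ s ∈ J, x s ^ 2))⁻¹ ∂(Measure.pi fun _ : Fin k => gaussianReal 0 1) ≤
      ENNReal.ofReal (1 / ((J.card : ℝ) - 2)) := by
  set γ := Measure.pi fun _ : Fin k => gaussianReal 0 1 with hγ
  have hp : ∀ x : Fin k → ℝ, (ENNReal.ofReal (∑ s ∈ J, x s ^ 2))⁻¹ ≤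
      ∫⁻ t in Set.Ioi (0 : ℝ),
        ENNReal.ofReal (Real.exp (-(t * (∑ s ∈ J, x s ^ 2) / 2)) / 2) := by
    intro x
    have h0 : 0 ≤ ∑ s ∈ J, x s ^ 2 := Finset.sum_nonneg fun _ _ => sq_nonneg _
    generalize (∑ s ∈ J, x s ^ 2) = a at h0
    exact lint_exp a h0
  calc _ ≤ ∫⁻ x : Fin k → ℝ, (∫⁻ t in Set.Ioi (0 : ℝ),
        ENNReal.ofReal (Real.exp (-(t * (∑ s ∈ J, x s ^ 2) / 2)) / 2)) ∂γ :=
        lintegral_mono fun x => hp x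
    _ = ∫⁻ t in Set.Ioi (0 : ℝ), (∫⁻ x : Fin k → ℝ,
        ENNReal.ofReal (Real.exp (-(t * (∑ s ∈ J, x s ^ 2) / 2)) / 2) ∂γ) := by
        apply lintegral_lintegral_swap
        apply Measurable.aemeasurable
        unfold Function.uncurry
        fun_prop
    _ = ∫⁻ t in Set.Ioi (0 : ℝ), ENNReal.ofReal ((1 + t) ^ (-(J.card / 2) : ℝ) / 2) := by
        apply setLIntegral_congr_fun measurableSet_Ioi
        intro t ht
        have ht0 : (0 : ℝ) < t := ht
        beta_reduce
        let f : Fin k → ℝ → ℝ := fun s x => if s ∈ J then Real.exp (-(t * x ^ 2 / 2)) else 1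
        have hf : ∀ x : Fin k → ℝ, Real.exp (-(t * (∑ s ∈ J, x s ^ 2) / 2)) / 2 =
            (∏ s, f s (x s)) / 2 := by
          intro x
          congr 1
          rw [Finset.prod_ite_mem, Finset.univ_inter, ← Real.exp_sum]
          congr 1
          rw [Finset.mul_sum, Finset.sum_div, ← Finset.sum_neg_distrib]
        have hfInt : ∀ s, Integrable (f s) (gaussianReal 0 1) := by
          intro s
          simp only [f]
          split_ifs
          · apply Integrable.of_bound (C := 1) (by fun_prop)
            refine Filter.Eventually.of_forall fun x => ?_
            rw [Real.norm_of_nonneg (Real.exp_pos _).le]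
            apply Real.exp_le_one_iff.mpr
            have : 0 ≤ t * x ^ 2 / 2 := by positivity
            linarith
          · exact integrable_const _
        simp_rw [hf]
        rw [← ofReal_integral_eq_lintegral_ofReal
          ((Integrable.fintype_prod (μ := fun _ => gaussianReal 0 1) hfInt).div_const 2)
          (Filter.Eventually.of_forall fun x => by
            have : 0 ≤ ∏ s, f s (x s) := Finset.prod_nonneg fun s _ => by
              simp only [f]; split_ifs <;> positivity
            show 0 ≤ _
            positivity)]
        rw [integral_div, integral_fintype_prod_eq_prod]
        congr 2
        have h1 : ∀ s, ∫ x, f s x ∂(gaussianReal 0 1) =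
            if s ∈ J then (1 + t) ^ (-(1 / 2) : ℝ) else 1 := by
          intro s
          simp only [f]
          split_ifs
          · exact gauss_exp t ht0.le
          · simp
        simp_rw [h1]
        rw [Finset.prod_ite_mem, Finset.univ_inter, Finset.prod_const, ← Real.rpow_natCast,
          ← Real.rpow_mul (by linarith)]
        congr 1; ring
    _ = _ := lint_pow _ hJ

lemma lint_dot_sq {k : ℕ} (z : Fin k → ℝ) :
    ∫⁻ x, ENNReal.ofReal ((x ⬝ᵥ z) ^ 2) ∂(Measure.pi fun _ : Fin k => gaussianReal 0 1) =
      ENNReal.ofReal (z ⬝ᵥ z) := by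
  let L : StrongDual ℝ (EuclideanSpace ℝ (Fin k)) := innerSL ℝ (WithLp.toLp 2 z)
  have h1 := variance_dual_stdGaussian L
  rw [variance_of_integral_eq_zero (by fun_prop) (integral_strongDual_stdGaussian L)] at h1
  have h2 : MemLp L 2 (stdGaussian (EuclideanSpace ℝ (Fin k))) :=
    IsGaussian.memLp_dual _ L 2 (by simp)
  have h3 := ofReal_integral_eq_lintegral_ofReal h2.integrable_sq
    (Filter.Eventually.of_forall fun x => sq_nonneg _)
  rw [h1, ← map_pi_eq_stdGaussian, lintegral_map (by fun_prop) (by fun_prop)] at h3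
  have h4 : ∀ x : Fin k → ℝ, L (WithLp.toLp 2 x) = x ⬝ᵥ z := by
    intro x
    simp [L, innerSL_apply_apply, PiLp.inner_apply, dotProduct]
  simp_rw [h4] at h3
  rw [← h3]
  congr 1
  rw [innerSL_apply_norm, EuclideanSpace.norm_sq_eq]
  simp [dotProduct, sq]

lemma lint_update {n k : ℕ} (i : Fin n) (f : (Fin n → Fin k → ℝ) → ℝ≥0∞) (hf : Measurable f) :
    ∫⁻ ω, f ω ∂gaussianEnsemble n k =
      ∫⁻ ω, (∫⁻ x, f (Function.update ω i x) ∂(Measure.pi fun _ : Fin k => gaussianReal 0 1))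
        ∂gaussianEnsemble n k := by
  unfold gaussianEnsemble
  let μ : ∀ _ : Fin n, Measure (Fin k → ℝ) := fun _ => Measure.pi fun _ => gaussianReal 0 1
  let g : (Fin n → Fin k → ℝ) → ℝ≥0∞ := fun ω => ∫⁻ x, f (Function.update ω i x) ∂(μ i)
  have hg : Measurable g := by
    have h := hf.lmarginal μ (s := {i})
    have h2 : g = MeasureTheory.lmarginal μ {i} f := by
      ext ω; rw [lmarginal_singleton]
    rw [h2]; exact h
  refine lintegral_eq_of_lmarginal_eq (μ := μ) {i} hf hg ?_
  ext ω
  rw [lmarginal_singleton, lmarginal_singleton]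
  simp [g, μ]

lemma lint_rot {n k : ℕ} (V : Matrix (Fin n) (Fin n) ℝ) (h1 : Vᵀ * V = 1) (h2 : V * Vᵀ = 1)
    (f : (Fin n → Fin k → ℝ) → ℝ≥0∞) (hf : Measurable f) :
    ∫⁻ ω, f (fun i a => (Vᵀ * Matrix.of ω) i a) ∂gaussianEnsemble n k =
      ∫⁻ ω, f ω ∂gaussianEnsemble n k := by
  let T : Matrix (Fin n) (Fin n) ℝ → (EuclideanSpace ℝ (Fin n × Fin k)) →ₗ[ℝ] (EuclideanSpace ℝ (Fin n × Fin k)) := fun U =>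
    { toFun := fun x => WithLp.toLp 2 fun p => ∑ j, U p.1 j * x (j, p.2)
      map_add' := by
        intro x y; ext p; simp [mul_add, Finset.sum_add_distrib]
      map_smul' := by
        intro c x; ext p; simp [Finset.mul_sum]
        exact Finset.sum_congr rfl fun _ _ => by ring }
  have hT : ∀ U U' x, U * U' = 1 → T U (T U' x) = x := by
    intro U U' x hU
    ext p
    simp only [T, LinearMap.coe_mk, AddHom.coe_mk, Finset.mul_sum]
    rw [Finset.sum_comm]
    have : ∀ y, ∑ j, U p.1 j * (U' j y * x (y, p.2)) = (U * U') p.1 y * x (y, p.2) := by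
      intro y; rw [Matrix.mul_apply, Finset.sum_mul]
      exact Finset.sum_congr rfl fun _ _ => by ring
    simp_rw [this, hU, Matrix.one_apply]
    simp
  let e : (EuclideanSpace ℝ (Fin n × Fin k)) ≃ₗ[ℝ] (EuclideanSpace ℝ (Fin n × Fin k)) := LinearEquiv.ofLinearMap (T Vᵀ) (T V)
    (LinearMap.ext fun x => hT _ _ x h1) (LinearMap.ext fun x => hT _ _ x h2)
  have hn : ∀ x, ‖e x‖ = ‖x‖ := by
    intro x
    rw [← sq_eq_sq₀ (norm_nonneg _) (norm_nonneg _), EuclideanSpace.real_norm_sq_eq, EuclideanSpace.real_norm_sq_eq,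
      Fintype.sum_prod_type_right, Fintype.sum_prod_type_right]
    refine Finset.sum_congr rfl fun a _ => ?_
    have h3 := dot_mulVec_mulVec Vᵀ Vᵀ (fun j => x (j, a)) (fun j => x (j, a))
    rw [transpose_transpose, h2, Matrix.one_mulVec] at h3
    simpa [dotProduct, Matrix.mulVec, ← sq, e, T] using h3
  let e' : (EuclideanSpace ℝ (Fin n × Fin k)) ≃ₗᵢ[ℝ] (EuclideanSpace ℝ (Fin n × Fin k)) := ⟨e, hn⟩
  have key : gaussianEnsemble n k = (stdGaussian (EuclideanSpace ℝ (Fin n × Fin k))).map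
      (fun x => fun i a => x (i, a)) := by
    rw [← map_pi_eq_stdGaussian, Measure.map_map (by fun_prop) (by fun_prop)]
    have h3 := Measure.infinitePi_map_curry (ι := Fin n) (κ := Fin k) (fun _ _ => gaussianReal 0 1)
    simp only [Measure.infinitePi_eq_pi] at h3
    rw [gaussianEnsemble, ← h3]
    rfl
  have hm : Measurable (fun ω : Fin n → Fin k → ℝ => fun i a => (Vᵀ * Matrix.of ω) i a) := by
    simp only [Matrix.mul_apply, Matrix.of_apply]
    fun_prop
  have hc : Measurable (fun x : (EuclideanSpace ℝ (Fin n × Fin k)) => (fun i a => x (i, a) : Fin n → Fin k → ℝ)) := by fun_prop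
  conv_rhs => rw [key, ← stdGaussian_map e', Measure.map_map hc (by fun_prop),
    lintegral_map hf (by fun_prop)]
  rw [key, lintegral_map (f := fun ω => f (fun i a => (Vᵀ * Matrix.of ω) i a)) (hf.comp hm) hc]
  rfl

lemma proj_bound {k : ℕ} (W : Submodule ℝ (EuclideanSpace ℝ (Fin k))) (m : ℕ) (hm : 3 ≤ m)
    (hW : Module.finrank ℝ W + m ≤ k) (F : (Fin k → ℝ) → ℝ≥0∞)
    (hF : ∀ x, F x ≤ ⨆ w : W, (ENNReal.ofReal (‖WithLp.toLp 2 x - (w : EuclideanSpace ℝ (Fin k))‖ ^ 2))⁻¹) :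
    ∫⁻ x, F x ∂(Measure.pi fun _ : Fin k => gaussianReal 0 1) ≤
      ENNReal.ofReal (1 / ((m : ℝ) - 2)) := by
  have hd0 := W.finrank_add_finrank_orthogonal
  rw [finrank_euclideanSpace_fin] at hd0
  obtain ⟨d, hd⟩ : ∃ d, d = Module.finrank ℝ Wᗮ := ⟨_, rfl⟩
  have hdm : m ≤ d := by omega
  have hdk : d ≤ k := by omega
  let v : Fin k → EuclideanSpace ℝ (Fin k) := fun i =>
    if h : (i : ℕ) < Module.finrank ℝ Wᗮ then
      ((stdOrthonormalBasis ℝ Wᗮ ⟨i, h⟩ : Wᗮ) : EuclideanSpace ℝ (Fin k)) else 0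
  have hv : Orthonormal ℝ (({i : Fin k | (i : ℕ) < Module.finrank ℝ Wᗮ} : Set (Fin k)).domRestrict v) := by
    have h1 := (stdOrthonormalBasis ℝ Wᗮ).orthonormal.comp_linearIsometry Wᗮ.subtypeₗᵢ
    have h2 := h1.comp (fun i : ({i : Fin k | (i : ℕ) < Module.finrank ℝ Wᗮ} : Set (Fin k)) =>
      (⟨i.1, i.2⟩ : Fin (Module.finrank ℝ Wᗮ))) (by
        intro a b hab
        simp only [Fin.mk.injEq] at hab
        exact Subtype.ext (Fin.ext hab))
    convert h2 using 1
    ext1 i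
    have hi : (i.1 : ℕ) < Module.finrank ℝ Wᗮ := i.2
    simp [v, hi, Set.domRestrict_apply]
  obtain ⟨b, hb⟩ := hv.exists_orthonormalBasis_extension_of_card_eq (by simp)
  have hbW : ∀ i : Fin k, (i : ℕ) < d → ∀ w ∈ W, inner ℝ (b i) w = 0 := by
    intro i hi w hw
    rw [hd] at hi
    rw [hb i hi]
    simp only [v, hi, dif_pos]
    exact Submodule.inner_left_of_mem_orthogonal hw (stdOrthonormalBasis ℝ Wᗮ ⟨i, hi⟩).2
  let J : Finset (Fin k) := Finset.univ.filter fun i => (i : ℕ) < d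
  have hJ : J.card = d := by
    simp only [J]
    rw [Fin.card_filter_val_lt]
    omega
  let G : EuclideanSpace ℝ (Fin k) → ℝ≥0∞ := fun y =>
    (ENNReal.ofReal (∑ s ∈ J, (inner ℝ (b s) y) ^ 2))⁻¹
  have hG : Measurable G := by
    simp only [G]
    fun_prop
  have hFG : ∀ x, F x ≤ G (WithLp.toLp 2 x) := by
    intro x
    refine (hF x).trans (iSup_le fun w => ?_)
    simp only [G]
    apply ENNReal.inv_le_inv.mpr
    apply ENNReal.ofReal_le_ofReal
    rw [← b.sum_sq_norm_inner_right]
    calc _ = ∑ s ∈ J, ‖inner ℝ (b s) (WithLp.toLp 2 x - (w : EuclideanSpace ℝ (Fin k)))‖ ^ 2 := by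
            refine Finset.sum_congr rfl fun s hs => ?_
            rw [inner_sub_right, hbW s (by simpa [J] using hs) w w.2, sub_zero, Real.norm_eq_abs,
              sq_abs]
      _ ≤ _ := Finset.sum_le_univ_sum_of_nonneg fun s => sq_nonneg _
  calc _ ≤ ∫⁻ x, G (WithLp.toLp 2 x) ∂(Measure.pi fun _ : Fin k => gaussianReal 0 1) :=
        lintegral_mono hFG
    _ = ∫⁻ y, G y ∂(stdGaussian (EuclideanSpace ℝ (Fin k))) := by
        rw [← map_pi_eq_stdGaussian, lintegral_map hG (by fun_prop)]
    _ = ∫⁻ x, (ENNReal.ofReal (∑ s ∈ J, x s ^ 2))⁻¹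
          ∂(Measure.pi fun _ : Fin k => gaussianReal 0 1) := by
        rw [stdGaussian_eq_map_pi_orthonormalBasis b, lintegral_map hG (by fun_prop)]
        refine lintegral_congr fun x => ?_
        simp only [G]
        congr 2
        refine Finset.sum_congr rfl fun s hs => ?_
        rw [b.orthonormal.inner_right_fintype]
    _ ≤ _ := inv_chi J (by omega)
    _ ≤ _ := by
        apply ENNReal.ofReal_le_ofReal
        rw [hJ]
        have h1 : (m : ℝ) ≤ d := by exact_mod_cast hdm
        have h2 : (3 : ℝ) ≤ m := by exact_mod_cast hm
        apply one_div_le_one_div_of_le <;> linarith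

instance gaussianEnsemble_prob (n k : ℕ) : IsProbabilityMeasure (gaussianEnsemble n k) := by
  unfold gaussianEnsemble; infer_instance

/-- Row `j` minus a combination of the other leading rows. -/
noncomputable def rowDiff {n k : ℕ} (ϱ : ℕ) (j : Fin n) (c : Fin n → ℝ) (ω : Fin n → Fin k → ℝ) :
    Fin k → ℝ :=
  fun a => ω j a - ∑ l : Fin n, if (l : ℕ) < ϱ ∧ l ≠ j then c l * ω l a else 0

/-- Inverse squared distance of row `j` to the span of the other leading rows. -/
noncomputable def invDist {n k : ℕ} (ϱ : ℕ) (j : Fin n) (ω : Fin n → Fin k → ℝ) : ℝ≥0∞ :=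
  ⨆ c : Fin n → ℚ, (ENNReal.ofReal
    (rowDiff ϱ j (fun l => (c l : ℝ)) ω ⬝ᵥ rowDiff ϱ j (fun l => (c l : ℝ)) ω))⁻¹

lemma measurable_invDist {n k : ℕ} (ϱ : ℕ) (j : Fin n) :
    Measurable (invDist (k := k) ϱ j) := by
  refine Measurable.iSup fun c => ?_
  simp only [rowDiff, dotProduct]
  apply Measurable.inv
  apply Measurable.ennreal_ofReal
  refine Finset.measurable_sum _ fun a _ => ?_
  have : Measurable fun ω : Fin n → Fin k → ℝ => ω j a -
      ∑ l : Fin n, if (l : ℕ) < ϱ ∧ l ≠ j then (c l : ℝ) * ω l a else 0 := by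
    refine Measurable.sub (by fun_prop) (Finset.measurable_sum _ fun l _ => ?_)
    split_ifs <;> fun_prop
  exact this.mul this

lemma le_invDist {n k : ℕ} (ϱ : ℕ) (j : Fin n) (ω : Fin n → Fin k → ℝ) (c : Fin n → ℝ) :
    (ENNReal.ofReal (rowDiff ϱ j c ω ⬝ᵥ rowDiff ϱ j c ω))⁻¹ ≤ invDist ϱ j ω := by
  have hd : DenseRange (Pi.map fun (_ : Fin n) (q : ℚ) => (q : ℝ)) :=
    DenseRange.piMap fun _ => Rat.denseRange_cast
  have hcont : Continuous fun c : Fin n → ℝ =>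
      (ENNReal.ofReal (rowDiff ϱ j c ω ⬝ᵥ rowDiff ϱ j c ω))⁻¹ := by
    apply Continuous.inv
    apply ENNReal.continuous_ofReal.comp
    simp only [rowDiff, dotProduct]
    refine continuous_finsetSum _ fun a _ => ?_
    have : Continuous fun c : Fin n → ℝ => ω j a -
        ∑ l : Fin n, if (l : ℕ) < ϱ ∧ l ≠ j then c l * ω l a else 0 := by
      refine Continuous.sub (by fun_prop) (continuous_finsetSum _ fun l _ => ?_)
      split_ifs <;> fun_prop
    exact this.mul this
  refine hd.induction_on (p := fun c => (ENNReal.ofReal (rowDiff ϱ j c ω ⬝ᵥ rowDiff ϱ j c ω))⁻¹ ≤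
    invDist ϱ j ω) c (isClosed_le hcont continuous_const) fun q => ?_
  exact le_iSup (fun c : Fin n → ℚ => (ENNReal.ofReal
    (rowDiff ϱ j (fun l => (c l : ℝ)) ω ⬝ᵥ rowDiff ϱ j (fun l => (c l : ℝ)) ω))⁻¹) q

lemma lint_invDist {n k : ℕ} (ϱ : ℕ) (hϱ : ϱ + 1 < k) (hkn : k ≤ n) (j : Fin n) (hj : (j : ℕ) < ϱ) :
    ∫⁻ ω, invDist ϱ j ω ∂gaussianEnsemble n k ≤ ENNReal.ofReal (1 / ((k : ℝ) - ϱ - 1)) := by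
  rw [lint_update j _ (measurable_invDist ϱ j)]
  have key : ∀ ω : Fin n → Fin k → ℝ, ∫⁻ x, invDist ϱ j (Function.update ω j x)
      ∂(Measure.pi fun _ : Fin k => gaussianReal 0 1) ≤ ENNReal.ofReal (1 / ((k : ℝ) - ϱ - 1)) := by
    intro ω
    let S : Finset (Fin n) := (Finset.univ.filter fun l : Fin n => (l : ℕ) < ϱ).erase j
    have hS : S.card + 1 = ϱ := by
      have : (Finset.univ.filter fun l : Fin n => (l : ℕ) < ϱ).card = ϱ := by
        rw [Fin.card_filter_val_lt]; omega
      simp only [S]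
      rw [Finset.card_erase_of_mem (by simp [hj]), this]; omega
    let W : Submodule ℝ (EuclideanSpace ℝ (Fin k)) :=
      Submodule.span ℝ (((S.image fun l => WithLp.toLp 2 (ω l)) : Finset _) : Set _)
    have hW : Module.finrank ℝ W ≤ S.card :=
      (finrank_span_finset_le_card _).trans Finset.card_image_le
    have h := proj_bound W (k - ϱ + 1) (by omega) (by omega)
      (fun x => invDist ϱ j (Function.update ω j x)) (by
        intro x
        refine iSup_le fun c => ?_
        let w : EuclideanSpace ℝ (Fin k) := ∑ l ∈ S, (c l : ℝ) • WithLp.toLp 2 (ω l)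
        have hw : w ∈ W := Submodule.sum_mem _ fun l hl => Submodule.smul_mem _ _
          (Submodule.subset_span (by
            simp only [Finset.coe_image]; exact ⟨l, hl, rfl⟩))
        refine le_trans (le_of_eq ?_) (le_iSup (fun w : W => (ENNReal.ofReal
          (‖WithLp.toLp 2 x - (w : EuclideanSpace ℝ (Fin k))‖ ^ 2))⁻¹) ⟨w, hw⟩)
        congr 2
        rw [EuclideanSpace.real_norm_sq_eq]
        simp only [dotProduct, ← sq]
        refine Finset.sum_congr rfl fun a _ => ?_
        congr 1
        simp only [rowDiff, w, Function.update_self, PiLp.sub_apply, WithLp.ofLp_sum,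
          Finset.sum_apply, PiLp.smul_apply, smul_eq_mul, WithLp.ofLp_smul, Pi.smul_apply]
        congr 1
        rw [← Finset.sum_filter]
        have hS' : (Finset.univ.filter fun l : Fin n => (l : ℕ) < ϱ ∧ l ≠ j) = S := by
          ext l; simp [S, and_comm]
        rw [hS']
        refine Finset.sum_congr rfl fun l hl => ?_
        rw [Function.update_of_ne (Finset.ne_of_mem_erase hl)])
    refine h.trans (le_of_eq ?_)
    congr 2
    rw [Nat.cast_add, Nat.cast_sub (by omega)]
    push_cast; ring
  calc _ ≤ ∫⁻ _ : Fin n → Fin k → ℝ, ENNReal.ofReal (1 / ((k : ℝ) - ϱ - 1)) ∂gaussianEnsemble n k :=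
        lintegral_mono key
    _ = _ := by simp

/-- Keep the leading rows. -/
noncomputable def maskRows {n k : ℕ} (ϱ : ℕ) (ω : Fin n → Fin k → ℝ) : Matrix (Fin n) (Fin k) ℝ :=
  Matrix.of fun l a => if (l : ℕ) < ϱ then ω l a else 0

/-- Complementary diagonal projector. -/
noncomputable def compDiag (n ϱ : ℕ) : Matrix (Fin n) (Fin n) ℝ :=
  diagonal fun l => if (l : ℕ) < ϱ then 0 else 1

/-- Regularised Gram matrix of the leading rows. -/
noncomputable def gram {n k : ℕ} (ϱ : ℕ) (ω : Fin n → Fin k → ℝ) : Matrix (Fin n) (Fin n) ℝ :=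
  maskRows ϱ ω * (maskRows ϱ ω)ᵀ + compDiag n ϱ

/-- Right inverse of the leading rows. -/
noncomputable def rightInv {n k : ℕ} (ϱ : ℕ) (ω : Fin n → Fin k → ℝ) : Matrix (Fin k) (Fin n) ℝ :=
  (maskRows ϱ ω)ᵀ * (gram ϱ ω)⁻¹

section
variable {n k : ℕ} (ϱ : ℕ) (ω : Fin n → Fin k → ℝ)

lemma compDiag_mask : compDiag n ϱ * maskRows ϱ ω = 0 := by
  ext l a
  simp only [compDiag, maskRows, Matrix.diagonal_mul, Matrix.of_apply, Matrix.zero_apply]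
  split_ifs <;> simp

lemma compDiag_transpose : (compDiag n ϱ)ᵀ = compDiag n ϱ := by simp [compDiag]

lemma mask_compDiag : (maskRows ϱ ω)ᵀ * compDiag n ϱ = 0 := by
  have := congrArg transpose (compDiag_mask ϱ ω)
  rwa [transpose_mul, compDiag_transpose, transpose_zero] at this

lemma compDiag_sq : compDiag n ϱ * compDiag n ϱ = compDiag n ϱ := by
  simp only [compDiag, Matrix.diagonal_mul_diagonal]
  congr 1; ext l; split_ifs <;> simp

lemma gram_transpose : (gram ϱ ω)ᵀ = gram ϱ ω := by
  simp [gram, compDiag_transpose]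

lemma gram_compDiag : gram ϱ ω * compDiag n ϱ = compDiag n ϱ := by
  rw [gram, Matrix.add_mul, Matrix.mul_assoc, mask_compDiag, Matrix.mul_zero, zero_add, compDiag_sq]

lemma compDiag_gram : compDiag n ϱ * gram ϱ ω = compDiag n ϱ := by
  rw [gram, Matrix.mul_add, ← Matrix.mul_assoc, compDiag_mask, Matrix.zero_mul, zero_add, compDiag_sq]

lemma measurable_rightInv (a : Fin k) (j : Fin n) :
    Measurable fun ω : Fin n → Fin k → ℝ => rightInv ϱ ω a j := by
  have hM : Continuous fun ω : Fin n → Fin k → ℝ => maskRows ϱ ω := by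
    refine continuous_matrix fun l a => ?_
    simp only [maskRows, Matrix.of_apply]
    split_ifs <;> fun_prop
  have hG : Continuous fun ω : Fin n → Fin k → ℝ => gram ϱ ω :=
    (hM.matrix_mul hM.matrix_transpose).add continuous_const
  simp only [rightInv, Matrix.mul_apply, Matrix.transpose_apply]
  refine Finset.measurable_sum _ fun l _ => Measurable.mul ?_ ?_
  · exact (hM.matrix_elem l a).measurable
  · simp only [Matrix.inv_def, Matrix.smul_apply, Ring.inverse_eq_inv', smul_eq_mul]
    exact (hG.matrix_det.measurable.inv).mul (hG.matrix_adjugate.matrix_elem l j).measurable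

lemma measurableSet_gram : MeasurableSet {ω : Fin n → Fin k → ℝ | (gram ϱ ω).det ≠ 0} := by
  have hM : Continuous fun ω : Fin n → Fin k → ℝ => maskRows ϱ ω := by
    refine continuous_matrix fun l a => ?_
    simp only [maskRows, Matrix.of_apply]
    split_ifs <;> fun_prop
  have hG : Continuous fun ω : Fin n → Fin k → ℝ => gram ϱ ω :=
    (hM.matrix_mul hM.matrix_transpose).add continuous_const
  exact (isOpen_ne.preimage hG.matrix_det).measurableSet

lemma rightInv_update (i : Fin n) (hi : ϱ ≤ (i : ℕ)) (x : Fin k → ℝ) :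
    rightInv ϱ (Function.update ω i x) = rightInv ϱ ω := by
  have : maskRows ϱ (Function.update ω i x) = maskRows ϱ ω := by
    ext l a
    simp only [maskRows, Matrix.of_apply]
    split_ifs with h
    · rw [Function.update_of_ne]
      rintro rfl; omega
    · rfl
  simp only [rightInv, gram, this]

lemma gram_det_ne (h : ∀ j : Fin n, (j : ℕ) < ϱ → invDist ϱ j ω ≠ ⊤) : (gram ϱ ω).det ≠ 0 := by
  intro hdet
  obtain ⟨y, hy0, hy⟩ := Matrix.exists_mulVec_eq_zero_iff.mpr hdet
  have hD : compDiag n ϱ *ᵥ y = 0 := by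
    rw [← compDiag_gram ϱ ω, ← Matrix.mulVec_mulVec, hy, Matrix.mulVec_zero]
  have hM : (maskRows ϱ ω)ᵀ *ᵥ y = 0 := by
    rw [gram, Matrix.add_mulVec, hD, add_zero] at hy
    have h1 := dot_mulVec_mulVec (maskRows ϱ ω)ᵀ (maskRows ϱ ω)ᵀ y y
    rw [transpose_transpose, hy, dotProduct_zero] at h1
    exact dotProduct_self_eq_zero.mp h1
  have hy2 : ∀ l : Fin n, ¬ (l : ℕ) < ϱ → y l = 0 := by
    intro l hl
    have := congrFun hD l
    simpa [compDiag, Matrix.mulVec_diagonal, hl] using this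
  obtain ⟨j, hj⟩ := Function.ne_iff.mp hy0
  have hj' : y j ≠ 0 := hj
  have hjϱ : (j : ℕ) < ϱ := by
    by_contra hc; exact hj' (hy2 j hc)
  refine h j hjϱ ?_
  have h2 := le_invDist ϱ j ω (fun l => - (y l / y j))
  have h3 : rowDiff ϱ j (fun l => - (y l / y j)) ω = 0 := by
    ext a
    have h4 := congrFun hM a
    simp only [Matrix.mulVec, dotProduct, Matrix.transpose_apply, maskRows, Matrix.of_apply,
      Pi.zero_apply] at h4
    rw [← Finset.add_sum_erase _ _ (Finset.mem_univ j), if_pos hjϱ] at h4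
    simp only [rowDiff, Pi.zero_apply]
    rw [← Finset.add_sum_erase _ _ (Finset.mem_univ j), if_neg (by simp), zero_add]
    have h5 : ∑ l ∈ Finset.univ.erase j, (if (l : ℕ) < ϱ ∧ l ≠ j then -(y l / y j) * ω l a else 0) =
        - (1 / y j) * ∑ l ∈ Finset.univ.erase j, (if (l : ℕ) < ϱ then ω l a else 0) * y l := by
      rw [Finset.mul_sum]
      refine Finset.sum_congr rfl fun l hl => ?_
      have hlj := Finset.ne_of_mem_erase hl
      by_cases hc : (l : ℕ) < ϱ
      · simp only [hc, hlj, ne_eq, not_false_eq_true, and_self, if_true]; ring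
      · simp [hc]
    rw [h5, eq_neg_of_add_eq_zero_right h4]
    field_simp
    ring
  rw [h3] at h2
  simpa using h2

lemma rightInv_zero (hG : (gram ϱ ω).det ≠ 0) (a : Fin k) (j : Fin n) (hj : ϱ ≤ (j : ℕ)) :
    rightInv ϱ ω a j = 0 := by
  have hu : IsUnit (gram ϱ ω).det := isUnit_iff_ne_zero.mpr hG
  have h1 : (gram ϱ ω)⁻¹ * compDiag n ϱ = compDiag n ϱ := by
    conv_lhs => rw [← gram_compDiag ϱ ω, ← Matrix.mul_assoc, Matrix.nonsing_inv_mul _ hu, Matrix.one_mul]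
  have h2 : rightInv ϱ ω * compDiag n ϱ = 0 := by
    rw [rightInv, Matrix.mul_assoc, h1, mask_compDiag]
  have h3 := congrFun (congrFun h2 a) j
  simpa [compDiag, Matrix.mul_diagonal, not_lt.mpr hj] using h3

lemma rightInv_spec (hG : (gram ϱ ω).det ≠ 0) (i j : Fin n) (hi : (i : ℕ) < ϱ) :
    (Matrix.of ω * rightInv ϱ ω) i j = if i = j then 1 else 0 := by
  have hu : IsUnit (gram ϱ ω).det := isUnit_iff_ne_zero.mpr hG
  have h1 : maskRows ϱ ω * rightInv ϱ ω = 1 - compDiag n ϱ * (gram ϱ ω)⁻¹ := by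
    rw [rightInv, ← Matrix.mul_assoc]
    have : maskRows ϱ ω * (maskRows ϱ ω)ᵀ = gram ϱ ω - compDiag n ϱ := by simp [gram]
    rw [this, Matrix.sub_mul, Matrix.mul_nonsing_inv _ hu]
  have h2 := congrFun (congrFun h1 i) j
  have h3 : (Matrix.of ω * rightInv ϱ ω) i j = (maskRows ϱ ω * rightInv ϱ ω) i j := by
    simp only [Matrix.mul_apply, maskRows, Matrix.of_apply, hi, if_true]
  rw [h3, h2]
  simp [compDiag, Matrix.diagonal_mul, hi, Matrix.one_apply]

lemma rightInv_col_le (j : Fin n) (hj : (j : ℕ) < ϱ) :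
    ENNReal.ofReal (∑ a, rightInv ϱ ω a j ^ 2) ≤ invDist ϱ j ω := by
  by_cases hG : (gram ϱ ω).det = 0
  · have : (gram ϱ ω)⁻¹ = 0 := by
      rw [Matrix.inv_def, hG, Ring.inverse_zero, zero_smul]
    simp [rightInv, this]
  have hu : IsUnit (gram ϱ ω).det := isUnit_iff_ne_zero.mpr hG
  have hone := rightInv_spec ϱ ω hG j j hj
  rw [if_pos rfl] at hone
  obtain ⟨b, hb⟩ : ∃ b : Fin n → ℝ, b = fun l => (gram ϱ ω)⁻¹ l j := ⟨_, rfl⟩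
  obtain ⟨z, hz⟩ : ∃ z : Fin k → ℝ, z = fun a => rightInv ϱ ω a j := ⟨_, rfl⟩
  have hzb : ∀ a, z a = ∑ l : Fin n, (if (l : ℕ) < ϱ then ω l a else 0) * b l := by
    intro a
    simp [hz, hb, rightInv, Matrix.mul_apply, maskRows]
  -- the squared norm of the column is the diagonal entry of the inverse
  have hzz : ∑ a, z a ^ 2 = b j := by
    have h1 : ∑ a, z a ^ 2 = ∑ l : Fin n, (if (l : ℕ) < ϱ then b l * (Matrix.of ω * rightInv ϱ ω) l j else 0) := by
      calc _ = ∑ a, ∑ l : Fin n, (if (l : ℕ) < ϱ then ω l a else 0) * b l * z a := by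
            refine Finset.sum_congr rfl fun a _ => ?_
            rw [sq]; nth_rewrite 1 [hzb a]; rw [Finset.sum_mul]
        _ = _ := by
            rw [Finset.sum_comm]
            refine Finset.sum_congr rfl fun l _ => ?_
            split_ifs
            · rw [Matrix.mul_apply, Finset.mul_sum]
              refine Finset.sum_congr rfl fun a _ => ?_
              simp only [hz, Matrix.of_apply]; ring
            · simp
    rw [h1]
    have h2 : ∀ l : Fin n, (if (l : ℕ) < ϱ then b l * (Matrix.of ω * rightInv ϱ ω) l j else 0) =
        if l = j then b j else 0 := by
      intro l
      by_cases hl : (l : ℕ) < ϱ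
      · rw [if_pos hl, rightInv_spec ϱ ω hG l j hl]
        by_cases hlj : l = j
        · simp [hlj]
        · simp [hlj]
      · have : l ≠ j := by rintro rfl; exact hl hj
        simp [hl, this]
    simp_rw [h2]
    simp
  have hbpos : 0 < b j := by
    rw [← hzz]
    refine lt_of_le_of_ne (Finset.sum_nonneg fun _ _ => sq_nonneg _) fun h => ?_
    have h0 := (Finset.sum_eq_zero_iff_of_nonneg fun a _ => sq_nonneg (z a)).mp h.symm
    rw [Matrix.mul_apply] at hone
    have : ∀ a, rightInv ϱ ω a j = 0 := by
      intro a
      have h1 := h0 a (Finset.mem_univ a)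
      rw [hz] at h1
      exact pow_eq_zero_iff two_ne_zero |>.mp h1
    simp [this] at hone
  have h2 := le_invDist ϱ j ω (fun l => - (b l / b j))
  have h3 : rowDiff ϱ j (fun l => - (b l / b j)) ω = fun a => z a / b j := by
    ext a
    rw [hzb a]
    simp only [rowDiff]
    rw [← Finset.add_sum_erase _ _ (Finset.mem_univ j), if_neg (by simp), zero_add]
    rw [← Finset.add_sum_erase _ _ (Finset.mem_univ j), if_pos hj]
    have h5 : ∑ l ∈ Finset.univ.erase j, (if (l : ℕ) < ϱ ∧ l ≠ j then -(b l / b j) * ω l a else 0) =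
        - (1 / b j) * ∑ l ∈ Finset.univ.erase j, (if (l : ℕ) < ϱ then ω l a else 0) * b l := by
      rw [Finset.mul_sum]
      refine Finset.sum_congr rfl fun l hl => ?_
      have hlj := Finset.ne_of_mem_erase hl
      by_cases hc : (l : ℕ) < ϱ
      · simp only [hc, hlj, ne_eq, not_false_eq_true, and_self, if_true]; ring
      · simp [hc]
    rw [h5]
    field_simp
    ring
  refine le_trans (le_of_eq ?_) h2
  have h4 : ∑ a, rightInv ϱ ω a j ^ 2 = b j := by rw [← hzz, hz]
  have h5 : rowDiff ϱ j (fun l => - (b l / b j)) ω ⬝ᵥ rowDiff ϱ j (fun l => - (b l / b j)) ω = (b j)⁻¹ := by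
    rw [h3]
    simp only [dotProduct]
    have : ∀ a, z a / b j * (z a / b j) = z a ^ 2 * (1 / b j ^ 2) := by intro a; field_simp
    simp_rw [this]
    rw [← Finset.sum_mul, hzz]
    field_simp
  rw [h4, h5, ENNReal.ofReal_inv_of_pos hbpos, inv_inv]

end

lemma lint_entry {n k : ℕ} (ϱ : ℕ) (hϱ : ϱ + 1 < k) (hkn : k ≤ n) (i j : Fin n)
    (hi : ϱ ≤ (i : ℕ)) (hj : (j : ℕ) < ϱ) :
    ∫⁻ ω, ENNReal.ofReal ((Matrix.of ω * rightInv ϱ ω) i j ^ 2) ∂gaussianEnsemble n k ≤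
      ENNReal.ofReal (1 / ((k : ℝ) - ϱ - 1)) := by
  have hm : Measurable fun ω : Fin n → Fin k → ℝ =>
      ENNReal.ofReal ((Matrix.of ω * rightInv ϱ ω) i j ^ 2) := by
    apply Measurable.ennreal_ofReal
    simp only [Matrix.mul_apply, Matrix.of_apply]
    refine Measurable.pow_const (Finset.measurable_sum _ fun a _ => ?_) 2
    exact Measurable.mul (by fun_prop) (measurable_rightInv ϱ a j)
  rw [lint_update i _ hm]
  refine le_trans (lintegral_mono fun ω => ?_) (lint_invDist ϱ hϱ hkn j hj)
  have h1 : ∀ x : Fin k → ℝ, (Matrix.of (Function.update ω i x) *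
      rightInv ϱ (Function.update ω i x)) i j = x ⬝ᵥ (fun a => rightInv ϱ ω a j) := by
    intro x
    rw [rightInv_update ϱ ω i hi]
    simp [Matrix.mul_apply, dotProduct]
  simp_rw [h1]
  rw [lint_dot_sq]
  refine le_trans (le_of_eq ?_) (rightInv_col_le ϱ ω j hj)
  congr 1
  simp [dotProduct, sq]

lemma lint_trace {n k : ℕ} (A : Matrix (Fin n) (Fin n) ℝ) (hA : A.PosSemidef) (hkn : k ≤ n)
    (ϱ : ℕ) (hϱ : ϱ + 1 < k) :
    ∫⁻ ω, ENNReal.ofReal ((A - nystrom A (Matrix.of ω)).trace) ∂gaussianEnsemble n k ≤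
      ENNReal.ofReal ((1 + (ϱ : ℝ) / ((k : ℝ) - ϱ - 1)) * schatten 1 (A - truncate A ϱ)) := by
  obtain ⟨V, h1, h2, h3⟩ := psd_eig hA
  have hpos : (0 : ℝ) < (k : ℝ) - ϱ - 1 := by
    have : ((ϱ + 1 : ℕ) : ℝ) < k := by exact_mod_cast hϱ
    push_cast at this; linarith
  let B : (Fin n → Fin k → ℝ) → ℝ≥0∞ := fun ω =>
    ∑ i : Fin n, if (i : ℕ) < ϱ then 0 else ENNReal.ofReal (sval A i) *
      (1 + ∑ j : Fin n, if (j : ℕ) < ϱ then ENNReal.ofReal ((Matrix.of ω * rightInv ϱ ω) i j ^ 2) else 0)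
  have hm : ∀ i j : Fin n, Measurable fun ω : Fin n → Fin k → ℝ =>
      ENNReal.ofReal ((Matrix.of ω * rightInv ϱ ω) i j ^ 2) := by
    intro i j
    apply Measurable.ennreal_ofReal
    simp only [Matrix.mul_apply, Matrix.of_apply]
    refine Measurable.pow_const (Finset.measurable_sum _ fun a _ => ?_) 2
    exact Measurable.mul (by fun_prop) (measurable_rightInv ϱ a j)
  have hm2 : ∀ i j : Fin n, Measurable fun ω : Fin n → Fin k → ℝ =>
      if (j : ℕ) < ϱ then ENNReal.ofReal ((Matrix.of ω * rightInv ϱ ω) i j ^ 2) else 0 := by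
    intro i j
    split_ifs
    · exact hm i j
    · exact measurable_const
  have hm3 : ∀ i : Fin n, Measurable fun ω : Fin n → Fin k → ℝ =>
      if (i : ℕ) < ϱ then 0 else ENNReal.ofReal (sval A i) *
      (1 + ∑ j : Fin n, if (j : ℕ) < ϱ then
        ENNReal.ofReal ((Matrix.of ω * rightInv ϱ ω) i j ^ 2) else 0) := by
    intro i
    split_ifs
    · exact measurable_const
    · exact Measurable.const_mul ((Finset.measurable_sum _ fun j _ => hm2 i j).const_add _) _
  have hB : Measurable B := Finset.measurable_sum _ fun i _ => hm3 i
  let B' : (Fin n → Fin k → ℝ) → ℝ≥0∞ := fun ω => if (gram ϱ ω).det ≠ 0 then B ω else ⊤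
  have hB' : Measurable B' := Measurable.ite (measurableSet_gram ϱ) hB measurable_const
  have hae : ∀ᵐ ω ∂gaussianEnsemble n k, (gram ϱ ω).det ≠ 0 := by
    have : ∀ᵐ ω ∂gaussianEnsemble n k, ∀ j : Fin n, (j : ℕ) < ϱ → invDist ϱ j ω ≠ ⊤ := by
      rw [ae_all_iff]
      intro j
      by_cases hj : (j : ℕ) < ϱ
      · have hlt := ae_lt_top (measurable_invDist (k := k) ϱ j)
          ((lint_invDist ϱ hϱ hkn j hj).trans_lt ENNReal.ofReal_lt_top).ne
        filter_upwards [hlt] with ω hω _ using hω.ne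
      · exact Filter.Eventually.of_forall fun ω h => absurd h hj
    filter_upwards [this] with ω hω using gram_det_ne ϱ ω hω
  have hpt : ∀ ω : Fin n → Fin k → ℝ, ENNReal.ofReal ((A - nystrom A (Matrix.of ω)).trace) ≤
      B' (fun i a => (Vᵀ * Matrix.of ω) i a) := by
    intro ω
    obtain ⟨ω', hω'⟩ : ∃ ω' : Fin n → Fin k → ℝ, ω' = fun i a => (Vᵀ * Matrix.of ω) i a := ⟨_, rfl⟩
    have hof : Vᵀ * Matrix.of ω = Matrix.of ω' := by rw [hω']; rfl
    rw [← hω']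
    by_cases hG : (gram ϱ ω').det ≠ 0
    · simp only [B', if_pos hG]
      have ht := trace_bound hA V h1 h2 h3 (Matrix.of ω) (rightInv ϱ ω') ϱ
        (fun a j hj => rightInv_zero ϱ ω' hG a j hj)
        (fun i j hi _ => by rw [hof]; exact rightInv_spec ϱ ω' hG i j hi)
      rw [hof] at ht
      refine (ENNReal.ofReal_le_ofReal ht).trans (le_of_eq ?_)
      rw [ENNReal.ofReal_sum_of_nonneg]
      · refine Finset.sum_congr rfl fun i _ => ?_
        split_ifs
        · simp
        · rw [ENNReal.ofReal_mul (sval_nonneg _ _), ENNReal.ofReal_add zero_le_one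
            (Finset.sum_nonneg fun j _ => by split_ifs <;> positivity), ENNReal.ofReal_one,
            ENNReal.ofReal_sum_of_nonneg (fun j _ => by split_ifs <;> positivity)]
          congr 2
          refine Finset.sum_congr rfl fun j _ => ?_
          split_ifs <;> simp
      · intro i _
        split_ifs
        · exact le_rfl
        · refine mul_nonneg (sval_nonneg _ _) (add_nonneg zero_le_one
            (Finset.sum_nonneg fun j _ => by split_ifs <;> positivity))
    · simp only [B', if_neg hG]; exact le_top
  have hcount : (Finset.univ.filter fun l : Fin n => (l : ℕ) < ϱ).card = ϱ := by
    rw [Fin.card_filter_val_lt]; omega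
  have hdiv : (0 : ℝ) ≤ 1 / ((k : ℝ) - ϱ - 1) := by positivity
  calc _ ≤ ∫⁻ ω, B' (fun i a => (Vᵀ * Matrix.of ω) i a) ∂gaussianEnsemble n k := lintegral_mono hpt
    _ = ∫⁻ ω, B' ω ∂gaussianEnsemble n k := lint_rot V h1 h2 B' hB'
    _ = ∫⁻ ω, B ω ∂gaussianEnsemble n k := by
        refine lintegral_congr_ae ?_
        filter_upwards [hae] with ω hω
        simp only [B', if_pos hω]
    _ ≤ ∑ i : Fin n, if (i : ℕ) < ϱ then 0 else ENNReal.ofReal (sval A i) *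
          ENNReal.ofReal (1 + (ϱ : ℝ) / ((k : ℝ) - ϱ - 1)) := by
        simp only [B]
        rw [lintegral_finsetSum _ fun i _ => hm3 i]
        refine Finset.sum_le_sum fun i _ => ?_
        by_cases hi : (i : ℕ) < ϱ
        · simp [hi]
        · simp only [hi, if_false]
          rw [lintegral_const_mul _ ((Finset.measurable_sum _ fun j _ => hm2 i j).const_add _),
            lintegral_add_left measurable_const, lintegral_finsetSum _ fun j _ => hm2 i j]
          gcongr
          rw [ENNReal.ofReal_add zero_le_one (by positivity), ENNReal.ofReal_one]
          gcongr
          · simp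
          · calc _ ≤ ∑ j : Fin n, if (j : ℕ) < ϱ then ENNReal.ofReal (1 / ((k : ℝ) - ϱ - 1)) else 0 := by
                  refine Finset.sum_le_sum fun j _ => ?_
                  by_cases hj : (j : ℕ) < ϱ
                  · simp only [hj, if_true]
                    exact lint_entry ϱ hϱ hkn i j (not_lt.mp hi) hj
                  · simp [hj]
              _ = _ := by
                  rw [← Finset.sum_filter, Finset.sum_const, hcount, nsmul_eq_mul,
                    ← ENNReal.ofReal_natCast, ← ENNReal.ofReal_mul (by positivity)]
                  congr 1; ring
    _ = ENNReal.ofReal ((1 + (ϱ : ℝ) / ((k : ℝ) - ϱ - 1)) *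
          ∑ i : Fin n, if (i : ℕ) < ϱ then 0 else sval A i) := by
        rw [Finset.mul_sum, ENNReal.ofReal_sum_of_nonneg]
        · refine Finset.sum_congr rfl fun i _ => ?_
          split_ifs
          · simp
          · rw [← ENNReal.ofReal_mul (sval_nonneg _ _), mul_comm]
        · intro i _
          refine mul_nonneg (by positivity) ?_
          split_ifs
          · exact le_rfl
          · exact sval_nonneg _ _
    _ ≤ _ := by
        apply ENNReal.ofReal_le_ofReal
        refine mul_le_mul_of_nonneg_left ?_ (by positivity)
        refine le_trans (le_of_eq ?_) (truncate_lower hA ϱ)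
        rw [Fin.sum_univ_eq_sum_range (fun i => if i < ϱ then 0 else sval A i) n]
        have hϱn : ϱ ≤ n := by omega
        have e1 : ∑ i ∈ Finset.range n, sval A (ϱ + i) = ∑ i ∈ Finset.range (n - ϱ), sval A (ϱ + i) := by
          symm
          apply Finset.sum_subset (Finset.range_mono (by omega))
          intro i _ hi
          apply sval_of_le
          simp at hi; omega
        rw [e1]
        obtain ⟨d, rfl⟩ : ∃ d, n = ϱ + d := ⟨n - ϱ, by omega⟩
        rw [Finset.sum_range_add, Finset.sum_eq_zero, zero_add, Nat.add_sub_cancel_left]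
        · refine Finset.sum_congr rfl fun i _ => ?_
          rw [if_neg (by omega)]
        · intro i hi
          rw [if_pos (Finset.mem_range.mp hi)]

theorem stmt3 {n k r : ℕ} (A : Matrix (Fin n) (Fin n) ℝ) (hA : A.PosSemidef)
    (hr : 1 ≤ r) (hrk : r < k) (hkn : k ≤ n) :
    ∀ ϱ : ℕ, ϱ + 1 < k →
      (∫ ω, schatten 1 (A - truncate (nystrom A (Matrix.of ω)) r) ∂ gaussianEnsemble n k)
        ≤ schatten 1 (A - truncate A r)
          + 2 * ((1 + (ϱ : ℝ) / ((k : ℝ) - ϱ - 1)) * schatten 1 (A - truncate A ϱ)) := by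
  intro ϱ hϱ
  have hpos : (0 : ℝ) < (k : ℝ) - ϱ - 1 := by
    have : ((ϱ + 1 : ℕ) : ℝ) < k := by exact_mod_cast hϱ
    push_cast at this; linarith
  have hs : ∀ M : Matrix (Fin n) (Fin n) ℝ, 0 ≤ schatten 1 M := by
    intro M
    rw [schatten_one]
    exact Finset.sum_nonneg fun i _ => sval_nonneg _ _
  have hT : 0 ≤ (1 + (ϱ : ℝ) / ((k : ℝ) - ϱ - 1)) * schatten 1 (A - truncate A ϱ) :=
    mul_nonneg (by positivity) (hs _)
  by_cases hi : Integrable (fun ω => schatten 1 (A - truncate (nystrom A (Matrix.of ω)) r))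
      (gaussianEnsemble n k)
  · have h1 := ofReal_integral_eq_lintegral_ofReal hi (Filter.Eventually.of_forall fun ω => hs _)
    have h2 : ENNReal.ofReal (∫ ω, schatten 1 (A - truncate (nystrom A (Matrix.of ω)) r)
        ∂ gaussianEnsemble n k) ≤ ENNReal.ofReal (schatten 1 (A - truncate A r) +
          (1 + (ϱ : ℝ) / ((k : ℝ) - ϱ - 1)) * schatten 1 (A - truncate A ϱ)) := by
      rw [h1, ENNReal.ofReal_add (hs _) hT]
      calc _ ≤ ∫⁻ ω, (ENNReal.ofReal (schatten 1 (A - truncate A r)) +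
              ENNReal.ofReal ((A - nystrom A (Matrix.of ω)).trace)) ∂gaussianEnsemble n k := by
            refine lintegral_mono fun ω => ?_
            exact (ENNReal.ofReal_le_ofReal (det_bound hA (Matrix.of ω))).trans ENNReal.ofReal_add_le
        _ ≤ _ := by
            rw [lintegral_add_left measurable_const]
            gcongr
            · simp
            · exact lint_trace A hA hkn ϱ hϱ
    have h3 := (ENNReal.ofReal_le_ofReal_iff (add_nonneg (hs _) hT)).mp h2
    linarith
  · rw [integral_undef hi]
    have := hs (A - truncate A r)
    linarith

end PsdSketch
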